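/- Let (u, π, v, θ) be a smooth solution of the stationary 3D tropical climate model. Assume that as |x| → +∞: |x|^{2/3}|u(x)| → 0, |x|^{2/3}|v(x)| remains bounded, and |x|^{4/3}|θ(x)| → 0 (that is, u(x) = o(|x|^{−2/3}), v(x) = O(|x|^{−2/3}), θ(x) = o(|x|^{−4/3})). Then u = 0, v = 0 and θ = 0 identically on ℝ³. -/

import Mathlib

open MeasureTheory Filter Metric

noncomputable section

set_option linter.unusedVariables false

abbrev R3 : Type := EuclideanSpace ℝ (Fin 3)

/-- Partial derivative of `f` in the `j`-th coordinate direction. -/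
def pd (f : R3 → ℝ) (j : Fin 3) (x : R3) : ℝ :=
  fderiv ℝ f x (EuclideanSpace.single j 1)

/-- Laplacian of `f`. -/
def lap (f : R3 → ℝ) (x : R3) : ℝ := ∑ j, pd (pd f j) j x

/-- The stationary 3D tropical climate model:
`-Δu + (u·∇)u + ∇π + div(v⊗v) = 0`, `-Δv + (u·∇)v + ∇θ + (v·∇)u = 0`,
`-Δθ + u·∇θ + div v = 0`, `div u = 0`. -/
def TCM (u v : R3 → R3) (pr θ : R3 → ℝ) : Prop :=
  (∀ i x, -lap (fun y => u y i) x + (∑ j, u x j * pd (fun y => u y i) j x)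
      + pd pr i x + (∑ j, pd (fun y => v y j * v y i) j x) = 0) ∧
  (∀ i x, -lap (fun y => v y i) x + (∑ j, u x j * pd (fun y => v y i) j x)
      + pd θ i x + (∑ j, v x j * pd (fun y => u y i) j x) = 0) ∧
  (∀ x, -lap θ x + (∑ j, u x j * pd θ j x) + (∑ j, pd (fun y => v y j) j x) = 0) ∧
  (∀ x, (∑ j, pd (fun y => u y j) j x) = 0)

/-- smooth scalar functions -/
abbrev Sm (f : R3 → ℝ) : Prop := ContDiff ℝ (⊤ : ℕ∞) f

lemma Sm.diff {f : R3 → ℝ} (hf : Sm f) : Differentiable ℝ f := hf.differentiable (by simp)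

lemma Sm.pd {f : R3 → ℝ} (hf : Sm f) (j : Fin 3) : Sm (pd f j) := by
  have h : ContDiff ℝ (⊤ : ℕ∞) (fderiv ℝ f) := hf.fderiv_right (by simp)
  exact h.clm_apply contDiff_const

lemma Sm.lap {f : R3 → ℝ} (hf : Sm f) : Sm (lap f) := by
  unfold _root_.lap
  exact ContDiff.sum fun j _ => (hf.pd j).pd j

lemma pd_add {f g : R3 → ℝ} (hf : Sm f) (hg : Sm g) (j : Fin 3) :
    pd (fun x => f x + g x) j = fun x => pd f j x + pd g j x := by
  funext x
  simp only [pd]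
  rw [fderiv_fun_add hf.diff.differentiableAt hg.diff.differentiableAt]; rfl

lemma pd_sub {f g : R3 → ℝ} (hf : Sm f) (hg : Sm g) (j : Fin 3) :
    pd (fun x => f x - g x) j = fun x => pd f j x - pd g j x := by
  funext x
  simp only [pd]
  rw [fderiv_fun_sub hf.diff.differentiableAt hg.diff.differentiableAt]; rfl

lemma pd_mul {f g : R3 → ℝ} (hf : Sm f) (hg : Sm g) (j : Fin 3) :
    pd (fun x => f x * g x) j = fun x => f x * pd g j x + g x * pd f j x := by
  funext x
  simp only [pd]
  rw [fderiv_fun_mul hf.diff.differentiableAt hg.diff.differentiableAt]; rfl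

lemma pd_sum {ι : Type*} (s : Finset ι) {f : ι → R3 → ℝ} (hf : ∀ i, Sm (f i)) (j : Fin 3) :
    pd (fun x => ∑ i ∈ s, f i x) j = fun x => ∑ i ∈ s, pd (f i) j x := by
  funext x
  simp only [pd]
  rw [fderiv_fun_sum (fun i _ => (hf i).diff.differentiableAt)]
  simp

lemma pd_const_mul {f : R3 → ℝ} (hf : Sm f) (c : ℝ) (j : Fin 3) :
    pd (fun x => c * f x) j = fun x => c * pd f j x := by
  funext x
  simp only [pd]
  rw [fderiv_const_mul hf.diff.differentiableAt]; rfl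

lemma pd_comm {f : R3 → ℝ} (hf : Sm f) (i j : Fin 3) : pd (pd f i) j = pd (pd f j) i := by
  funext x
  have h : ContDiff ℝ (⊤ : ℕ∞) (fderiv ℝ f) := hf.fderiv_right (by simp)
  have hd : DifferentiableAt ℝ (fderiv ℝ f) x := (h.differentiable (by simp)).differentiableAt
  have hs : IsSymmSndFDerivAt ℝ f x := by
    apply hf.contDiffAt.isSymmSndFDerivAt
    simp only [minSmoothness_of_isRCLikeNormedField]
    exact WithTop.coe_le_coe.2 (le_top : (2:ℕ∞) ≤ ⊤)
  have key : ∀ i j : Fin 3, pd (pd f i) j x = fderiv ℝ (fderiv ℝ f) x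
      (EuclideanSpace.single j 1) (EuclideanSpace.single i 1) := by
    intro i j
    simp only [pd]
    have : (fun y => fderiv ℝ f y (EuclideanSpace.single i 1)) = fun y => (fderiv ℝ f y) (EuclideanSpace.single i (1:ℝ)) := rfl
    change fderiv ℝ (fun y => fderiv ℝ f y (EuclideanSpace.single i 1)) x _ = _
    rw [fderiv_clm_apply hd (differentiableAt_const _)]
    simp
  rw [key, key]
  exact hs _ _

lemma pd_cs {f : R3 → ℝ} (hf : HasCompactSupport f) (j : Fin 3) : HasCompactSupport (pd f j) :=
  hf.fderiv_apply ℝ _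

lemma pd_scale {f : R3 → ℝ} (hf : Sm f) (c : ℝ) (j : Fin 3) :
    pd (fun x => f (c • x)) j = fun x => c * pd f j (c • x) := by
  funext x
  simp only [pd]
  rw [fderiv_comp_smul]
  simp

lemma Sm.scale {f : R3 → ℝ} (hf : Sm f) (c : ℝ) : Sm (fun x => f (c • x)) :=
  hf.comp (contDiff_const_smul c)

lemma lap_scale {f : R3 → ℝ} (hf : Sm f) (c : ℝ) :
    lap (fun x => f (c • x)) = fun x => c ^ 2 * lap f (c • x) := by
  funext x
  simp only [lap, pd_scale hf]
  rw [Finset.mul_sum]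
  refine Finset.sum_congr rfl fun j _ => ?_
  rw [pd_const_mul ((hf.pd j).scale c), pd_scale (hf.pd j)]
  ring

lemma lap_const_mul {f : R3 → ℝ} (hf : Sm f) (c : ℝ) :
    lap (fun x => c * f x) = fun x => c * lap f x := by
  funext x
  simp only [lap, pd_const_mul hf, pd_const_mul (hf.pd _), Finset.mul_sum]

lemma lap_sub {f g : R3 → ℝ} (hf : Sm f) (hg : Sm g) :
    lap (fun x => f x - g x) = fun x => lap f x - lap g x := by
  funext x
  simp only [lap, pd_sub hf hg, pd_sub (hf.pd _) (hg.pd _), Finset.sum_sub_distrib]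

lemma int_cs {f g : R3 → ℝ} (hf : Continuous f) (hg : Continuous g) (hc : HasCompactSupport g) :
    Integrable (fun x => f x * g x) :=
  (hf.mul hg).integrable_of_hasCompactSupport hc.mul_left

lemma ibp {f g : R3 → ℝ} (hf : Sm f) (hg : Sm g) (hc : HasCompactSupport g) (j : Fin 3) :
    ∫ x, f x * pd g j x = - ∫ x, pd f j x * g x :=
  integral_mul_fderiv_eq_neg_fderiv_mul_of_integrable
    (int_cs (hf.pd j).continuous hg.continuous hc)
    (int_cs hf.continuous (hg.pd j).continuous (pd_cs hc j))
    (int_cs hf.continuous hg.continuous hc)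
    (fun x _ => hf.diff.differentiableAt) (fun x _ => hg.diff.differentiableAt)

lemma ibp2 {f g : R3 → ℝ} (hf : Sm f) (hg : Sm g) (hc : HasCompactSupport g) (i j : Fin 3) :
    ∫ x, f x * pd (pd g i) j x = ∫ x, pd (pd f j) i x * g x := by
  rw [ibp hf (hg.pd i) (pd_cs hc i), ibp (hf.pd j) hg hc, neg_neg]

lemma ibp_lap {f g : R3 → ℝ} (hf : Sm f) (hg : Sm g) (hc : HasCompactSupport g) :
    ∫ x, f x * lap g x = ∫ x, lap f x * g x := by
  simp only [lap, Finset.mul_sum, Finset.sum_mul]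
  rw [integral_finsetSum, integral_finsetSum]
  · exact Finset.sum_congr rfl fun j _ => ibp2 hf hg hc j j
  · exact fun j _ => int_cs ((hf.pd j).pd j).continuous hg.continuous hc
  · exact fun j _ => int_cs hf.continuous ((hg.pd j).pd j).continuous (pd_cs (pd_cs hc j) j)

/-- L2 identity for the Hessian -/
lemma hess_l2 {q : R3 → ℝ} (hq : Sm q) (hc : HasCompactSupport q) :
    ∑ i, ∑ j, ∫ x, (pd (pd q i) j x) ^ 2 = ∫ x, (lap q x) ^ 2 := by
  have key : ∀ i j, ∫ x, (pd (pd q i) j x) ^ 2 = ∫ x, pd (pd q i) i x * pd (pd q j) j x := by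
    intro i j
    have h1 : ∫ x, (pd (pd q i) j x) ^ 2 = ∫ x, pd (pd q i) j x * pd (pd q i) j x := by
      simp only [sq]
    rw [h1, ibp ((hq.pd i).pd j) (hq.pd i) (pd_cs hc i)]
    have e1 : pd (pd (pd q i) j) j = pd (pd (pd q j) j) i := by
      rw [pd_comm hq i j, pd_comm (hq.pd j) i j]
    rw [e1]
    have := ibp ((hq.pd j).pd j) (hq.pd i) (pd_cs hc i) i
    rw [← this]
    simp only [mul_comm]
  simp only [key, lap]
  have : ∀ x, (∑ j, pd (pd q j) j x) ^ 2 = ∑ i, ∑ j, pd (pd q i) i x * pd (pd q j) j x := by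
    intro x; rw [sq, Finset.sum_mul_sum]
  simp only [this]
  have hi : ∀ i j, Integrable (fun x => pd (pd q i) i x * pd (pd q j) j x) := fun i j =>
    int_cs ((hq.pd i).pd i).continuous ((hq.pd j).pd j).continuous (pd_cs (pd_cs hc j) j)
  rw [integral_finsetSum _ (fun i _ => integrable_finsetSum _ fun j _ => hi i j)]
  refine Finset.sum_congr rfl fun i _ => ?_
  rw [integral_finsetSum _ (fun j _ => hi i j)]

/-- convolution -/
abbrev cv (f g : R3 → ℝ) : R3 → ℝ :=
  MeasureTheory.convolution f g (ContinuousLinearMap.lsmul ℝ ℝ) volume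

lemma cv_apply (f g : R3 → ℝ) (x : R3) : cv f g x = ∫ t, f t * g (x - t) := by
  simp [cv, MeasureTheory.convolution_def]

lemma Sm.cv {f g : R3 → ℝ} (hf : Sm f) (hg : Sm g) (hc : HasCompactSupport g) : Sm (cv f g) :=
  hc.contDiff_convolution_right _ hf.continuous.locallyIntegrable hg

lemma cv_cs {f g : R3 → ℝ} (hf : HasCompactSupport f) (hg : HasCompactSupport g) :
    HasCompactSupport (cv f g) := HasCompactSupport.convolution _ hf hg

lemma pd_cv_right {f g : R3 → ℝ} (hf : Sm f) (hg : Sm g) (hc : HasCompactSupport g) (j : Fin 3) :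
    pd (cv f g) j = cv f (pd g j) := by
  funext x
  have h := hc.hasFDerivAt_convolution_right (ContinuousLinearMap.lsmul ℝ ℝ)
    (μ := volume) hf.continuous.locallyIntegrable (hg.of_le (by simp)) x
  simp only [pd]
  rw [h.fderiv, convolution_precompR_apply _ hf.continuous.locallyIntegrable (hc.fderiv ℝ)
    ((hg.of_le (by simp) : ContDiff ℝ 1 g).continuous_fderiv one_ne_zero)]
  rfl

lemma cv_comm (f g : R3 → ℝ) : cv f g = cv g f := by
  funext x
  rw [cv, ← convolution_flip]
  simp [cv, MeasureTheory.convolution_def, mul_comm]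

lemma pd_cv_left {f g : R3 → ℝ} (hf : Sm f) (hcf : HasCompactSupport f) (hg : Sm g) (j : Fin 3) :
    pd (cv f g) j = cv (pd f j) g := by
  rw [cv_comm, pd_cv_right hg hf hcf, cv_comm]

lemma lap_cv_left {f g : R3 → ℝ} (hf : Sm f) (hcf : HasCompactSupport f) (hg : Sm g) (x : R3) :
    lap (cv f g) x = cv (lap f) g x := by
  simp only [lap]
  have : ∀ j, pd (pd (cv f g) j) j x = ∫ t, pd (pd f j) j t * g (x - t) := by
    intro j
    rw [pd_cv_left hf hcf hg, pd_cv_left (hf.pd j) (pd_cs hcf j) hg, cv_apply]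
  simp only [this, cv_apply, lap, Finset.sum_mul]
  rw [integral_finsetSum]
  intro j _
  have := (int_cs (hg.continuous.comp (continuous_const.sub continuous_id) : Continuous fun t => g (x - t)) ((hf.pd j).pd j).continuous (pd_cs (pd_cs hcf j) j))
  simpa [mul_comm] using this

def kt (t : ℝ) : ℝ := Real.smoothTransition (2 * t - 1)

lemma kt_smooth : ContDiff ℝ (⊤ : ℕ∞) kt :=
  Real.smoothTransition.contDiff.comp (by fun_prop)

lemma kt_zero {t : ℝ} (h : t ≤ 1/2) : kt t = 0 := Real.smoothTransition.zero_of_nonpos (by linarith)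

lemma kt_one {t : ℝ} (h : 1 ≤ t) : kt t = 1 := Real.smoothTransition.one_of_one_le (by linarith)

lemma kt_mono : Monotone kt := fun a b h => Real.smoothTransition.monotone (by linarith)

def kb (t : ℝ) : ℝ := kt t * (2 * t * √t)⁻¹

lemma kb_zero {t : ℝ} (h : t ≤ 1/2) : kb t = 0 := by simp [kb, kt_zero h]

lemma kb_ev {t : ℝ} (h : t < 1/2) : kb =ᶠ[nhds t] fun _ => 0 := by
  filter_upwards [Iio_mem_nhds h] with s hs using kb_zero (le_of_lt hs)

lemma kb_smooth : ContDiff ℝ (⊤ : ℕ∞) kb := by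
  rw [contDiff_iff_contDiffAt]
  intro t
  rcases lt_or_ge t (1/2) with h | h
  · exact contDiffAt_const.congr_of_eventuallyEq (kb_ev h)
  · have ht : 0 < t := by linarith
    unfold kb
    refine kt_smooth.contDiffAt.mul (ContDiffAt.inv ?_ ?_)
    · exact (contDiffAt_const.mul contDiffAt_id).mul (Real.contDiffAt_sqrt ht.ne')
    · positivity

def kg (t : ℝ) : ℝ := 1 - ∫ s in (1:ℝ)..t, kb s

lemma kg_deriv (t : ℝ) : HasDerivAt kg (- kb t) t := by
  have h := intervalIntegral.integral_hasDerivAt_right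
    (kb_smooth.continuous.intervalIntegrable 1 t)
    (kb_smooth.continuous.stronglyMeasurableAtFilter _ _) kb_smooth.continuous.continuousAt
  exact h.const_sub 1

lemma kg_smooth : ContDiff ℝ (⊤ : ℕ∞) kg := by
  rw [contDiff_infty_iff_deriv]
  refine ⟨fun t => (kg_deriv t).differentiableAt, ?_⟩
  have : deriv kg = fun t => - kb t := funext fun t => (kg_deriv t).deriv
  rw [this]
  exact kb_smooth.neg

lemma kg_eq {t : ℝ} (h : 1 ≤ t) : kg t = (√t)⁻¹ := by
  have h1 : ∫ s in (1:ℝ)..t, kb s = -(√t)⁻¹ - (-(√1)⁻¹) := by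
    apply intervalIntegral.integral_eq_sub_of_hasDerivAt (f := fun s => -(√s)⁻¹)
    · intro s hs
      rw [Set.uIcc_of_le h] at hs
      have hs0 : 0 < s := by linarith [hs.1]
      have := ((Real.hasDerivAt_sqrt hs0.ne').inv (by positivity)).neg
      convert! this using 1
      simp only [kb, kt_one hs.1]
      rw [Real.sq_sqrt hs0.le]
      field_simp
    · exact kb_smooth.continuous.intervalIntegrable 1 t
  rw [kg, h1]
  simp

lemma kb_deriv {t : ℝ} (ht : 0 < t) : 6 * kb t + 4 * t * deriv kb t = 2 * deriv kt t * (√t)⁻¹ := by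
  have h1 : HasDerivAt kt (deriv kt t) t :=
    (kt_smooth.differentiable (by simp)).differentiableAt.hasDerivAt
  have h2 : HasDerivAt (fun s : ℝ => 2 * s * √s) (3 * √t) t := by
    have := ((hasDerivAt_id t).const_mul 2).mul (Real.hasDerivAt_sqrt ht.ne')
    convert! this using 1
    have : √t * √t = t := Real.mul_self_sqrt ht.le
    simp only [id]
    field_simp
    nlinarith
  have h3 := h1.mul (h2.inv (by positivity))
  have h4 : deriv kb t = _ := h3.deriv
  rw [h4]
  have e : √t * √t = t := Real.mul_self_sqrt ht.le
  have hs : 0 < √t := Real.sqrt_pos.2 ht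
  simp only [kb, Pi.inv_apply]
  generalize √t = s at *
  subst e
  field_simp
  ring

lemma krho_nonneg {t : ℝ} (ht : 0 ≤ t) : 0 ≤ 6 * kb t + 4 * t * deriv kb t := by
  rcases ht.eq_or_lt with h | h
  · subst h; simp [kb_zero]
  · rw [kb_deriv h]
    have : 0 ≤ deriv kt t := kt_mono.deriv_nonneg
    positivity

lemma krho_zero {t : ℝ} (ht : 1 < t) : 6 * kb t + 4 * t * deriv kb t = 0 := by
  rw [kb_deriv (by linarith)]
  have : kt =ᶠ[nhds t] fun _ => 1 := by
    filter_upwards [Ioi_mem_nhds ht] with s hs using kt_one (le_of_lt hs)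
  simp [this.deriv_eq]

lemma krho_ne : ∃ t, 0 < t ∧ 6 * kb t + 4 * t * deriv kb t ≠ 0 := by
  by_contra! hcon
  have hd : ∀ t, deriv kt t = 0 := by
    intro t
    rcases lt_or_ge t (1/2) with h | h
    · have : kt =ᶠ[nhds t] fun _ => 0 := by
        filter_upwards [Iio_mem_nhds h] with s hs using kt_zero (le_of_lt hs)
      simp [this.deriv_eq]
    · have ht : 0 < t := by linarith
      have := hcon t ht
      rw [kb_deriv ht] at this
      have hs : 0 < √t := Real.sqrt_pos.2 ht
      simpa [hs.ne'] using this
  have := is_const_of_deriv_eq_zero (kt_smooth.differentiable (by simp)) hd 0 1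
  rw [kt_zero (by norm_num), kt_one le_rfl] at this
  norm_num at this

lemma coord_smooth (j : Fin 3) : Sm (fun x : R3 => x j) := by
  exact (EuclideanSpace.proj (𝕜 := ℝ) j).contDiff

lemma pd_coord (i j : Fin 3) (x : R3) : pd (fun x : R3 => x i) j x = if i = j then 1 else 0 := by
  simp only [pd]
  have : fderiv ℝ (fun x : R3 => x i) x = EuclideanSpace.proj (𝕜 := ℝ) i :=
    (EuclideanSpace.proj (𝕜 := ℝ) i : R3 →L[ℝ] ℝ).hasFDerivAt.fderiv
  rw [this]
  simp [Pi.single_apply]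

/-- radial functions -/
lemma radial_smooth {k : ℝ → ℝ} (hk : ContDiff ℝ (⊤ : ℕ∞) k) : Sm (fun x : R3 => k (‖x‖ ^ 2)) :=
  hk.comp (contDiff_norm_sq ℝ)

lemma pd_radial {k : ℝ → ℝ} (hk : ContDiff ℝ (⊤ : ℕ∞) k) (j : Fin 3) :
    pd (fun x : R3 => k (‖x‖ ^ 2)) j = fun x => deriv k (‖x‖ ^ 2) * (2 * x j) := by
  funext x
  simp only [pd]
  have h1 : HasDerivAt k (deriv k (‖x‖^2)) (‖x‖^2) :=
    (hk.differentiable (by simp)).differentiableAt.hasDerivAt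
  have h2 : HasFDerivAt (fun x : R3 => ‖x‖ ^ 2) (2 • innerSL ℝ x) x :=
    (hasStrictFDerivAt_norm_sq x).hasFDerivAt
  have := h1.comp_hasFDerivAt x h2
  change fderiv ℝ (k ∘ fun x : R3 => ‖x‖ ^ 2) x _ = _
  rw [this.fderiv]
  simp [EuclideanSpace.inner_single_right]

def kG (x : R3) : ℝ := kg (‖x‖ ^ 2)

lemma kG_smooth : Sm kG := radial_smooth kg_smooth

lemma kG_lap (x : R3) : lap kG x = - (6 * kb (‖x‖^2) + 4 * ‖x‖^2 * deriv kb (‖x‖^2)) := by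
  have hd : deriv kg = fun t => - kb t := funext fun t => (kg_deriv t).deriv
  have h1 : ∀ j, pd kG j = fun x => (fun x : R3 => (fun t => - 2 * kb t) (‖x‖ ^ 2)) x * (fun x : R3 => x j) x := by
    intro j
    have := pd_radial kg_smooth j
    rw [hd] at this
    change pd (fun x => kg (‖x‖ ^ 2)) j = _
    rw [this]; funext x; ring
  have hkb : ContDiff ℝ (⊤ : ℕ∞) (fun t => -2 * kb t) := contDiff_const.mul kb_smooth
  have hd2 : ∀ t, deriv (fun t => -2 * kb t) t = -2 * deriv kb t := fun t =>
    deriv_const_mul _ (kb_smooth.differentiable (by simp)).differentiableAt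
  have h2 : ∀ j, pd (pd kG j) j x = -2 * kb (‖x‖^2) - 4 * deriv kb (‖x‖^2) * (x j)^2 := by
    intro j
    rw [h1, pd_mul (radial_smooth hkb) (coord_smooth j), pd_radial hkb]
    simp only [pd_coord, hd2]
    simp
    ring
  have h3 : ‖x‖ ^ 2 = x 0 ^ 2 + x 1 ^ 2 + x 2 ^ 2 := by
    rw [EuclideanSpace.norm_sq_eq]; simp [Fin.sum_univ_three]
  simp only [lap, h2, Fin.sum_univ_three]
  have : ∀ a b : ℝ, (-2 * a - 4 * b * x 0 ^ 2) + (-2 * a - 4 * b * x 1 ^ 2) + (-2 * a - 4 * b * x 2 ^ 2)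
      = - (6 * a + 4 * ‖x‖^2 * b) := by intro a b; rw [h3]; ring
  exact this _ _

lemma cs_of {f : R3 → ℝ} {r : ℝ} (h : ∀ x, r < ‖x‖ → f x = 0) : HasCompactSupport f := by
  apply HasCompactSupport.intro (isCompact_closedBall (0 : R3) r)
  intro x hx
  exact h x (by simpa using hx)

lemma kernel : ∃ ρ : R3 → ℝ, Sm ρ ∧ (∀ x, 1 < ‖x‖ → ρ x = 0) ∧ (∀ x, 0 ≤ ρ x) ∧ ∫ x, ρ x = 1 ∧
    ∀ δ R : ℝ, 0 < δ → δ ≤ R → ∃ N : R3 → ℝ, Sm N ∧ (∀ x, R < ‖x‖ → N x = 0) ∧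
      ∀ x, lap N x = R⁻¹ ^ 3 * ρ (R⁻¹ • x) - δ⁻¹ ^ 3 * ρ (δ⁻¹ • x) := by
  set ρ0 : R3 → ℝ := fun x => 6 * kb (‖x‖^2) + 4 * ‖x‖^2 * deriv kb (‖x‖^2) with hρ0
  have hl : ∀ x, ρ0 x = - lap kG x := fun x => by rw [kG_lap, neg_neg]
  have hs : Sm ρ0 := by
    have : ρ0 = fun x => - lap kG x := funext hl
    rw [this]; exact kG_smooth.lap.neg
  have hz : ∀ x, 1 < ‖x‖ → ρ0 x = 0 := fun x hx => krho_zero (by nlinarith)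
  have hn : ∀ x, 0 ≤ ρ0 x := fun x => krho_nonneg (by positivity)
  have hint : Integrable ρ0 := hs.continuous.integrable_of_hasCompactSupport (cs_of hz)
  have hpos : 0 < ∫ x, ρ0 x := by
    obtain ⟨t, ht, hne⟩ := krho_ne
    have hx : ρ0 (EuclideanSpace.single 0 (√t)) ≠ 0 := by
      simp only [hρ0]
      simpa [Real.sq_sqrt ht.le] using hne
    exact integral_pos_of_integrable_nonneg_nonzero hs.continuous hint hn hx
  set c := ∫ x, ρ0 x with hc
  refine ⟨fun x => c⁻¹ * ρ0 x, contDiff_const.mul hs, fun x hx => by simp [hz x hx],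
    fun x => mul_nonneg (by positivity) (hn x), ?_, ?_⟩
  · rw [integral_const_mul, inv_mul_cancel₀ hpos.ne']
  · intro δ R hδ hR
    have hR0 : 0 < R := by linarith
    refine ⟨fun x => c⁻¹ * δ⁻¹ * kG (δ⁻¹ • x) - c⁻¹ * R⁻¹ * kG (R⁻¹ • x), ?_, ?_, ?_⟩
    · exact (contDiff_const.mul (kG_smooth.scale _)).sub (contDiff_const.mul (kG_smooth.scale _))
    · intro x hx
      have hx0 : 0 < ‖x‖ := by linarith
      have key : ∀ s : ℝ, 0 < s → s ≤ R → s⁻¹ * kG (s⁻¹ • x) = ‖x‖⁻¹ := by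
        intro s hs hsR
        have h1 : ‖s⁻¹ • x‖ = ‖x‖ / s := by
          rw [norm_smul, norm_inv, Real.norm_of_nonneg hs.le]; field_simp
        have h2 : 1 ≤ ‖x‖ / s := by rw [le_div_iff₀ hs]; linarith
        rw [kG, kg_eq (by rw [h1]; nlinarith), Real.sqrt_sq (norm_nonneg _), h1]
        field_simp
      beta_reduce
      rw [mul_assoc, key δ hδ hR, mul_assoc, key R hR0 le_rfl, sub_self]
    · intro x
      rw [lap_sub (contDiff_const.mul (kG_smooth.scale _)) (contDiff_const.mul (kG_smooth.scale _)),
        lap_const_mul (kG_smooth.scale _), lap_const_mul (kG_smooth.scale _), lap_scale kG_smooth,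
        lap_scale kG_smooth]
      simp only [hl]
      ring

lemma ball_int {a : R3 → ℝ} (ha : Continuous a) (L : ℝ) :
    IntegrableOn a (closedBall 0 L) :=
  ha.continuousOn.integrableOn_compact (isCompact_closedBall _ _)

lemma int_to_ball {f : R3 → ℝ} {L : ℝ} (h : ∀ x, L < ‖x‖ → f x = 0) :
    ∫ x, f x = ∫ x in closedBall 0 L, f x := by
  symm
  apply setIntegral_eq_integral_of_forall_compl_eq_zero
  intro x hx
  exact h x (by simpa using hx)

lemma abs_int_le {a b : R3 → ℝ} (ha : Continuous a) (hb : Continuous b) {M L : ℝ}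
    (hz : ∀ x, L < ‖x‖ → b x = 0) (hM : ∀ x, |b x| ≤ M) :
    |∫ x, a x * b x| ≤ M * ∫ x in closedBall 0 L, |a x| := by
  rw [int_to_ball (L := L) (fun x hx => by rw [hz x hx, mul_zero]), ← integral_const_mul]
  refine (abs_integral_le_integral_abs).trans ?_
  apply integral_mono (ball_int (ha.mul hb).abs L) (ball_int (continuous_const.mul ha.abs) L)
  intro x
  change |a x * b x| ≤ M * |a x|
  rw [abs_mul, mul_comm]
  exact mul_le_mul_of_nonneg_right (hM x) (abs_nonneg _)

lemma cv_bound {f g : R3 → ℝ} (hf : Continuous f) (hg : Continuous g) (hc : HasCompactSupport g)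
    {M : ℝ} (hM : ∀ x, |f x| ≤ M) (x : R3) : |cv f g x| ≤ M * ∫ x, |g x| := by
  rw [cv_comm, cv_apply, ← integral_const_mul]
  have hi : Integrable (fun t => M * |g t|) :=
    ((hg.integrable_of_hasCompactSupport hc).abs).const_mul M
  refine (abs_integral_le_integral_abs).trans (integral_mono_of_nonneg ?_ hi ?_)
  · exact ae_of_all _ fun t => abs_nonneg _
  · refine ae_of_all _ fun t => ?_
    change |g t * f (x - t)| ≤ M * |g t|
    rw [abs_mul, mul_comm]
    exact mul_le_mul_of_nonneg_right (hM _) (abs_nonneg _)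

lemma cv_zero {f g : R3 → ℝ} {a b : ℝ} (hf : ∀ x, a < ‖x‖ → f x = 0) (hg : ∀ x, b < ‖x‖ → g x = 0)
    (x : R3) (hx : a + b < ‖x‖) : cv f g x = 0 := by
  rw [cv_apply]
  apply integral_eq_zero_of_ae
  refine ae_of_all _ fun t => ?_
  change f t * g (x - t) = 0
  by_cases h : a < ‖t‖
  · rw [hf t h, zero_mul]
  · rw [hg (x - t), mul_zero]
    have := norm_sub_norm_le x t
    linarith

lemma pd_zero_out {f : R3 → ℝ} {a : ℝ} (hf : ∀ x, a < ‖x‖ → f x = 0) (j : Fin 3) (x : R3)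
    (hx : a < ‖x‖) : pd f j x = 0 := by
  have : f =ᶠ[nhds x] fun _ => 0 := by
    have : {y : R3 | a < ‖y‖} ∈ nhds x := (isOpen_lt continuous_const continuous_norm).mem_nhds hx
    filter_upwards [this] with y hy using hf y hy
  simp [pd, this.fderiv_eq]

lemma lap_zero_out {f : R3 → ℝ} {a : ℝ} (hf : ∀ x, a < ‖x‖ → f x = 0) (x : R3)
    (hx : a < ‖x‖) : lap f x = 0 := by
  simp only [lap]
  exact Finset.sum_eq_zero fun j _ => pd_zero_out (fun y hy => pd_zero_out hf j y hy) j x hx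

lemma bdd_cs {f : R3 → ℝ} (hf : Continuous f) (hc : HasCompactSupport f) : ∃ C, 0 ≤ C ∧ ∀ x, |f x| ≤ C := by
  obtain ⟨C, hC⟩ := hf.bounded_above_of_compact_support hc
  exact ⟨C, (norm_nonneg _).trans (hC 0), hC⟩

/-- Poisson equation for the pressure -/
lemma lap_p {p : R3 → ℝ} {U : Fin 3 → R3 → ℝ} {F : Fin 3 → Fin 3 → R3 → ℝ}
    (hU : ∀ i, Sm (U i)) (hF : ∀ i j, Sm (F i j))
    (hmom : ∀ i x, pd p i x = lap (U i) x - ∑ j, pd (F i j) j x)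
    (hdiv : ∀ x, ∑ i, pd (U i) i x = 0) (x : R3) :
    lap p x = - ∑ i, ∑ j, pd (pd (F i j) j) i x := by
  have h1 : ∀ i, pd (pd p i) i x = pd (lap (U i)) i x - ∑ j, pd (pd (F i j) j) i x := by
    intro i
    have : pd p i = fun x => lap (U i) x - ∑ j, pd (F i j) j x := funext (hmom i)
    rw [this, pd_sub (hU i).lap (ContDiff.sum fun j _ => (hF i j).pd j),
      pd_sum _ (fun j => (hF i j).pd j)]
  have h2 : ∑ i, pd (lap (U i)) i x = 0 := by
    have h3 : ∀ i, pd (lap (U i)) i x = ∑ j, pd (pd (pd (U i) i) j) j x := by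
      intro i
      have : lap (U i) = fun x => ∑ j, pd (pd (U i) j) j x := rfl
      rw [this, pd_sum _ (fun j => ((hU i).pd j).pd j)]
      refine Finset.sum_congr rfl fun j _ => ?_
      rw [pd_comm ((hU i).pd j) j i, pd_comm (hU i) j i]
    simp only [h3]
    rw [Finset.sum_comm]
    refine Finset.sum_eq_zero fun j _ => ?_
    have e : (fun x => ∑ i, pd (U i) i x) = fun _ => 0 := funext hdiv
    have e1 : pd (fun x => ∑ i, pd (U i) i x) j = fun x => ∑ i, pd (pd (U i) i) j x :=
      pd_sum _ (fun i => (hU i).pd i) j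
    have e2 : pd (fun x => ∑ i, pd (pd (U i) i) j x) j = fun x => ∑ i, pd (pd (pd (U i) i) j) j x :=
      pd_sum _ (fun i => ((hU i).pd i).pd j) j
    rw [← congrFun e2 x, ← e1, e]
    have e3 : pd (fun _ : R3 => (0:ℝ)) j = fun _ => 0 := by funext y; simp [pd]
    rw [e3, e3]
  simp only [lap, h1, Finset.sum_sub_distrib] at h2 ⊢
  rw [h2]; simp

lemma press_A {p : R3 → ℝ} {U : Fin 3 → R3 → ℝ} {F : Fin 3 → Fin 3 → R3 → ℝ} (hp : Sm p)
    (hU : ∀ i, Sm (U i)) (hF : ∀ i j, Sm (F i j))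
    (hmom : ∀ i x, pd p i x = lap (U i) x - ∑ j, pd (F i j) j x)
    (hdiv : ∀ x, ∑ i, pd (U i) i x = 0) {q : R3 → ℝ} (hq : Sm q) {L : ℝ}
    (hz : ∀ x, L < ‖x‖ → q x = 0) {m : ℝ} (hm : ∀ x, |lap q x| ≤ m) {l : ℝ} (hl : 0 < l) :
    |∫ x, p x * lap q x| ≤ l / 2 * (∑ i, ∑ j, ∫ x in closedBall 0 L, (F i j x) ^ 2)
      + m ^ 2 / (2 * l) * volume.real (closedBall (0 : R3) L) := by
  have hc := cs_of hz
  have e1 : ∫ x, p x * lap q x = - ∑ i, ∑ j, ∫ x, F i j x * pd (pd q i) j x := by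
    rw [ibp_lap hp hq hc]
    simp only [lap_p hU hF hmom hdiv]
    have hi : ∀ i j, Integrable (fun x => pd (pd (F i j) j) i x * q x) := fun i j =>
      int_cs (((hF i j).pd j).pd i).continuous hq.continuous hc
    have : ∀ x, (- ∑ i, ∑ j, pd (pd (F i j) j) i x) * q x
        = - ∑ i, ∑ j, pd (pd (F i j) j) i x * q x := by
      intro x; simp only [neg_mul, Finset.sum_mul]
    simp only [this]
    rw [integral_neg, integral_finsetSum _ (fun i _ => integrable_finsetSum _ fun j _ => hi i j)]
    congr 1
    refine Finset.sum_congr rfl fun i _ => ?_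
    rw [integral_finsetSum _ (fun j _ => hi i j)]
    refine Finset.sum_congr rfl fun j _ => ?_
    rw [ibp2 (hF i j) hq hc]
  have e2 : ∀ i j, |∫ x, F i j x * pd (pd q i) j x| ≤
      l / 2 * (∫ x in closedBall 0 L, (F i j x) ^ 2) + 1 / (2 * l) * ∫ x, (pd (pd q i) j x) ^ 2 := by
    intro i j
    have hqz : ∀ x, L < ‖x‖ → pd (pd q i) j x = 0 :=
      fun x hx => pd_zero_out (fun y hy => pd_zero_out hz i y hy) j x hx
    have hF' := (hF i j).continuous
    have hq' := ((hq.pd i).pd j).continuous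
    have hi1 : IntegrableOn (fun x => l / 2 * F i j x ^ 2) (closedBall 0 L) :=
      ball_int (continuous_const.mul (hF'.pow 2)) L
    have hi2 : IntegrableOn (fun x => 1 / (2 * l) * pd (pd q i) j x ^ 2) (closedBall 0 L) :=
      ball_int (continuous_const.mul (hq'.pow 2)) L
    rw [int_to_ball (L := L) (fun x hx => by rw [hqz x hx, mul_zero]),
      int_to_ball (L := L) (f := fun x => (pd (pd q i) j x) ^ 2)
        (fun x hx => by rw [hqz x hx]; ring), ← integral_const_mul, ← integral_const_mul,
      ← integral_add hi1 hi2]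
    refine (abs_integral_le_integral_abs).trans ?_
    apply integral_mono (ball_int (hF'.mul hq').abs L)
      (ball_int ((continuous_const.mul (hF'.pow 2)).add (continuous_const.mul (hq'.pow 2))) L)
    intro x
    change |F i j x * pd (pd q i) j x| ≤ l / 2 * F i j x ^ 2 + 1 / (2 * l) * pd (pd q i) j x ^ 2
    generalize F i j x = a
    generalize pd (pd q i) j x = b
    have h1 : l / 2 * a ^ 2 + 1 / (2 * l) * b ^ 2 - a * b = 1 / (2 * l) * (l * a - b) ^ 2 := by
      field_simp; ring
    have h2 : l / 2 * a ^ 2 + 1 / (2 * l) * b ^ 2 + a * b = 1 / (2 * l) * (l * a + b) ^ 2 := by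
      field_simp; ring
    have h3 : 0 ≤ 1 / (2 * l) * (l * a - b) ^ 2 := by positivity
    have h4 : 0 ≤ 1 / (2 * l) * (l * a + b) ^ 2 := by positivity
    rw [abs_le]; constructor <;> linarith
  have e3 : ∫ x, (lap q x) ^ 2 ≤ m ^ 2 * volume.real (closedBall (0 : R3) L) := by
    rw [int_to_ball (L := L) (fun x hx => by rw [lap_zero_out hz x hx]; ring)]
    have := integral_mono (μ := volume.restrict (closedBall (0 : R3) L)) (ball_int (hq.lap.continuous.pow 2) L) (ball_int (continuous_const (y := m ^ 2)) L)
      (fun x => by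
        change lap q x ^ 2 ≤ m ^ 2
        rw [← sq_abs]
        exact pow_le_pow_left₀ (abs_nonneg _) (hm x) 2)
    simpa [mul_comm] using this
  calc |∫ x, p x * lap q x| ≤ ∑ i, ∑ j, |∫ x, F i j x * pd (pd q i) j x| := by
        rw [e1, abs_neg]
        exact (Finset.abs_sum_le_sum_abs _ _).trans
          (Finset.sum_le_sum fun i _ => Finset.abs_sum_le_sum_abs _ _)
    _ ≤ ∑ i, ∑ j, (l / 2 * (∫ x in closedBall 0 L, (F i j x) ^ 2) + 1 / (2 * l) * ∫ x, (pd (pd q i) j x) ^ 2) :=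
        Finset.sum_le_sum fun i _ => Finset.sum_le_sum fun j _ => e2 i j
    _ = l / 2 * (∑ i, ∑ j, (∫ x in closedBall 0 L, (F i j x) ^ 2)) + 1 / (2 * l) * ∫ x, (lap q x) ^ 2 := by
        rw [← hess_l2 hq hc]
        simp only [Finset.sum_add_distrib, Finset.mul_sum]
    _ ≤ _ := by
        have : 1 / (2 * l) * ∫ x, (lap q x) ^ 2 ≤ 1 / (2 * l) * (m ^ 2 * volume.real (closedBall (0 : R3) L)) :=
          mul_le_mul_of_nonneg_left e3 (by positivity)
        refine (add_le_add_right this _).trans (le_of_eq ?_)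
        ring

lemma press_B {p : R3 → ℝ} {U : Fin 3 → R3 → ℝ} {F : Fin 3 → Fin 3 → R3 → ℝ} (hp : Sm p)
    (hU : ∀ i, Sm (U i)) (hF : ∀ i j, Sm (F i j))
    (hmom : ∀ i x, pd p i x = lap (U i) x - ∑ j, pd (F i j) j x)
    {k : Fin 3 → R3 → ℝ} (hk : ∀ i, Sm (k i)) (hc : ∀ i, HasCompactSupport (k i)) :
    ∫ x, p x * ∑ i, pd (k i) i x =
      - ∑ i, ((∫ x, U i x * lap (k i) x) + ∑ j, ∫ x, F i j x * pd (k i) j x) := by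
  simp only [Finset.mul_sum]
  rw [integral_finsetSum _ (fun i _ => int_cs hp.continuous ((hk i).pd i).continuous (pd_cs (hc i) i)),
    ← Finset.sum_neg_distrib]
  refine Finset.sum_congr rfl fun i _ => ?_
  rw [ibp hp (hk i) (hc i)]
  congr 1
  simp only [hmom, sub_mul, Finset.sum_mul]
  have hi : ∀ j, Integrable (fun x => pd (F i j) j x * k i x) := fun j =>
    int_cs ((hF i j).pd j).continuous (hk i).continuous (hc i)
  rw [integral_sub (int_cs (hU i).lap.continuous (hk i).continuous (hc i))
    (integrable_finsetSum _ fun j _ => hi j), ← ibp_lap (hU i) (hk i) (hc i),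
    integral_finsetSum _ (fun j _ => hi j), sub_eq_add_neg, ← Finset.sum_neg_distrib]
  congr 1
  refine Finset.sum_congr rfl fun j _ => ?_
  rw [ibp (hF i j) (hk i) (hc i)]

/-- scaled kernel -/
def sc (ρ : R3 → ℝ) (s : ℝ) (x : R3) : ℝ := s⁻¹ ^ 3 * ρ (s⁻¹ • x)

lemma sc_smooth {ρ : R3 → ℝ} (h : Sm ρ) (s : ℝ) : Sm (sc ρ s) := contDiff_const.mul (h.scale _)

lemma sc_zero {ρ : R3 → ℝ} (h : ∀ x, 1 < ‖x‖ → ρ x = 0) {s : ℝ} (hs : 0 < s) (x : R3) (hx : s < ‖x‖) :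
    sc ρ s x = 0 := by
  rw [sc, h, mul_zero]
  rw [norm_smul, norm_inv, Real.norm_of_nonneg hs.le, inv_mul_eq_div, lt_div_iff₀ hs]; linarith

lemma sc_int {ρ : R3 → ℝ} (h : ∫ x, ρ x = 1) {s : ℝ} (hs : 0 < s) : ∫ x, sc ρ s x = 1 := by
  simp only [sc]
  rw [integral_const_mul, Measure.integral_comp_smul, h]
  have : 0 < s ^ 3 := by positivity
  simp [abs_of_pos hs]
  field_simp

/-- approximate identity -/
lemma sc_dist {ρ : R3 → ℝ} (hz : ∀ x, 1 < ‖x‖ → ρ x = 0) (hn : ∀ x, 0 ≤ ρ x)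
    (h1 : ∫ x, ρ x = 1) {s : ℝ} (hs : 0 < s) {g : R3 → ℝ} (hg : Continuous g) {x : R3} {z e : ℝ} (he : 0 ≤ e)
    (hd : ∀ y ∈ ball x (2 * s), dist (g y) z ≤ e) : dist (cv (sc ρ s) g x) z ≤ e := by
  refine dist_convolution_le he ?_ (fun y => mul_nonneg (by positivity) (hn _)) (sc_int h1 hs)
    hg.aestronglyMeasurable hd
  intro y hy
  by_contra hcon
  exact hy (sc_zero hz hs y (by simp at hcon; linarith))

lemma press : ∃ C : ℝ, 0 ≤ C ∧ ∀ (p : R3 → ℝ) (U : Fin 3 → R3 → ℝ) (F : Fin 3 → Fin 3 → R3 → ℝ)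
    (h : Fin 3 → R3 → ℝ) (m l R : ℝ), Sm p → (∀ i, Sm (U i)) → (∀ i j, Sm (F i j)) →
    (∀ i x, pd p i x = lap (U i) x - ∑ j, pd (F i j) j x) → (∀ x, ∑ i, pd (U i) i x = 0) →
    (∀ i, Sm (h i)) → 0 < R → 0 < l → (∀ i x, 2 * R < ‖x‖ → h i x = 0) →
    (∀ x, |∑ i, pd (h i) i x| ≤ m) →
    |∫ x, p x * ∑ i, pd (h i) i x| ≤ l / 2 * (∑ i, ∑ j, ∫ x in closedBall 0 (3 * R), (F i j x) ^ 2)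
      + (2 * m) ^ 2 / (2 * l) * volume.real (closedBall (0 : R3) (3 * R))
      + ∑ i, (C * R⁻¹ ^ 5 * (∫ x, |h i x|) * (∫ x in closedBall 0 (3 * R), |U i x|)
        + ∑ j, C * R⁻¹ ^ 4 * (∫ x, |h i x|) * ∫ x in closedBall 0 (3 * R), |F i j x|) := by
  obtain ⟨ρ, hρ, hρz, hρn, hρ1, hN⟩ := kernel
  have hρc := cs_of hρz
  obtain ⟨C0, hC0, hC0'⟩ := bdd_cs hρ.lap.continuous (cs_of (lap_zero_out hρz))
  choose C1 hC1 hC1' using fun j => bdd_cs (hρ.pd j).continuous (pd_cs hρc j)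
  refine ⟨C0 + ∑ j, C1 j, add_nonneg hC0 (Finset.sum_nonneg fun j _ => hC1 j), ?_⟩
  set C := C0 + ∑ j, C1 j with hC
  have hCl : C0 ≤ C := by
    have := Finset.sum_nonneg fun j (_ : j ∈ Finset.univ) => hC1 j
    linarith
  have hCp : ∀ j, C1 j ≤ C := by
    intro j
    have := Finset.single_le_sum (fun j (_ : j ∈ Finset.univ) => hC1 j) (Finset.mem_univ j)
    linarith
  intro p U F h m l R hp hU hF hmom hdiv hh hR hl hz hm
  set g : R3 → ℝ := fun x => ∑ i, pd (h i) i x with hg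
  have hgs : Sm g := ContDiff.sum fun i _ => (hh i).pd i
  have hgz : ∀ x, 2 * R < ‖x‖ → g x = 0 := fun x hx =>
    Finset.sum_eq_zero fun i _ => pd_zero_out (hz i) i x hx
  have hgc := cs_of hgz
  have hm0 : 0 ≤ m := (abs_nonneg _).trans (hm 0)
  have hhc : ∀ i, HasCompactSupport (h i) := fun i => cs_of (hz i)
  have hscs : ∀ s, Sm (sc ρ s) := sc_smooth hρ
  have hscz : ∀ s, 0 < s → ∀ x, s < ‖x‖ → sc ρ s x = 0 := fun s hs x hx => sc_zero hρz hs x hx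
  have hscc : ∀ s, 0 < s → HasCompactSupport (sc ρ s) := fun s hs => cs_of (hscz s hs)
  have hbd : ∀ s, 0 < s → ∀ x, |cv (sc ρ s) g x| ≤ m := by
    intro s hs x
    have := sc_dist hρz hρn hρ1 hs hgs.continuous (x := x) (z := 0) hm0
      (fun y _ => by simpa using hm y)
    simpa using this
  -- term B
  have hB : |∫ x, p x * cv (sc ρ R) g x| ≤ ∑ i, (C * R⁻¹ ^ 5 * (∫ x, |h i x|) * (∫ x in closedBall 0 (3 * R), |U i x|)
        + ∑ j, C * R⁻¹ ^ 4 * (∫ x, |h i x|) * ∫ x in closedBall 0 (3 * R), |F i j x|) := by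
    have hk : ∀ i, Sm (cv (sc ρ R) (h i)) := fun i => (hscs R).cv (hh i) (hhc i)
    have hkz : ∀ i x, 3 * R < ‖x‖ → cv (sc ρ R) (h i) x = 0 := fun i x hx =>
      cv_zero (hscz R hR) (hz i) x (by linarith)
    have e : ∀ x, cv (sc ρ R) g x = ∑ i, pd (cv (sc ρ R) (h i)) i x := by
      intro x
      simp only [pd_cv_right (hscs R) (hh _) (hhc _), cv_apply, hg, Finset.mul_sum]
      rw [integral_finsetSum]
      intro i _
      have := int_cs (((hh i).pd i).continuous.comp (continuous_const.sub continuous_id) :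
        Continuous fun t => pd (h i) i (x - t)) (hscs R).continuous (hscc R hR)
      simpa [mul_comm] using this
    simp only [e]
    rw [press_B hp hU hF hmom hk (fun i => cs_of (hkz i)), abs_neg]
    refine (Finset.abs_sum_le_sum_abs _ _).trans (Finset.sum_le_sum fun i _ => ?_)
    refine (abs_add_le _ _).trans (add_le_add ?_ ((Finset.abs_sum_le_sum_abs _ _).trans (Finset.sum_le_sum fun j _ => ?_)))
    · refine abs_int_le (hU i).continuous (hk i).lap.continuous (lap_zero_out (hkz i)) ?_
      intro x
      rw [lap_cv_left (hscs R) (hscc R hR) (hh i)]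
      refine cv_bound (hscs R).lap.continuous (hh i).continuous (hhc i) ?_ x
      intro y
      have : lap (sc ρ R) y = R⁻¹ ^ 5 * lap ρ (R⁻¹ • y) := by
        have : sc ρ R = fun x => R⁻¹ ^ 3 * (fun x => ρ (R⁻¹ • x)) x := rfl
        rw [this, lap_const_mul (hρ.scale _), lap_scale hρ]; ring
      rw [this, abs_mul, abs_of_pos (by positivity : 0 < R⁻¹ ^ 5), mul_comm]
      exact mul_le_mul_of_nonneg_right ((hC0' _).trans hCl) (by positivity)
    · refine abs_int_le (hF i j).continuous ((hk i).pd j).continuous (pd_zero_out (hkz i) j) ?_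
      intro x
      rw [pd_cv_left (hscs R) (hscc R hR) (hh i)]
      refine cv_bound ((hscs R).pd j).continuous (hh i).continuous (hhc i) ?_ x
      intro y
      have : pd (sc ρ R) j y = R⁻¹ ^ 4 * pd ρ j (R⁻¹ • y) := by
        have : sc ρ R = fun x => R⁻¹ ^ 3 * (fun x => ρ (R⁻¹ • x)) x := rfl
        rw [this, pd_const_mul (hρ.scale _), pd_scale hρ]; ring
      rw [this, abs_mul, abs_of_pos (by positivity : 0 < R⁻¹ ^ 4), mul_comm]
      exact mul_le_mul_of_nonneg_right ((hC1' j _).trans (hCp j)) (by positivity)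
  -- term A
  have hA : ∀ δ, 0 < δ → δ ≤ R → |∫ x, p x * (cv (sc ρ R) g x - cv (sc ρ δ) g x)| ≤
      l / 2 * (∑ i, ∑ j, ∫ x in closedBall 0 (3 * R), (F i j x) ^ 2)
      + (2 * m) ^ 2 / (2 * l) * volume.real (closedBall (0 : R3) (3 * R)) := by
    intro δ hδ hδR
    obtain ⟨N, hNs, hNz, hNl⟩ := hN δ R hδ hδR
    have hNc := cs_of hNz
    have e : ∀ x, lap (cv N g) x = cv (sc ρ R) g x - cv (sc ρ δ) g x := by
      intro x
      have hl : lap N = fun x => sc ρ R x - sc ρ δ x := funext hNl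
      rw [lap_cv_left hNs hNc hgs, hl]
      simp only [cv_apply, sub_mul]
      have hi : ∀ s, 0 < s → Integrable (fun t => sc ρ s t * g (x - t)) := by
        intro s hs
        have := int_cs (hgs.continuous.comp (continuous_const.sub continuous_id) :
          Continuous fun t => g (x - t)) (hscs s).continuous (hscc s hs)
        simpa [mul_comm] using this
      exact integral_sub (hi R hR) (hi δ hδ)
    simp only [← e]
    refine press_A hp hU hF hmom hdiv (hNs.cv hgs hgc) (L := 3 * R) ?_ ?_ hl
    · intro x hx
      exact cv_zero hNz hgz x (by linarith)
    · intro x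
      rw [e]
      refine (abs_sub _ _).trans ?_
      linarith [hbd R hR x, hbd δ hδ x]
  -- limit
  refine le_of_forall_pos_le_add fun η hη => ?_
  set I := ∫ x in closedBall 0 (3 * R), |p x| with hI
  have hI0 : 0 ≤ I := integral_nonneg fun x => abs_nonneg _
  obtain ⟨d, hd, hd'⟩ := Metric.uniformContinuous_iff.1
    (hgc.uniformContinuous_of_continuous hgs.continuous) (η / (I + 1)) (by positivity)
  set δ := min R (d / 2) with hδ
  have hδ0 : 0 < δ := by rw [hδ]; positivity
  have hδR : δ ≤ R := min_le_left _ _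
  have hδd : 2 * δ ≤ d := by have : δ ≤ d / 2 := min_le_right _ _; linarith
  have hcδ : Continuous (cv (sc ρ δ) g) := ((hscs δ).cv hgs hgc).continuous
  have hcR : Continuous (cv (sc ρ R) g) := ((hscs R).cv hgs hgc).continuous
  have hL : |∫ x, p x * (cv (sc ρ δ) g x - g x)| ≤ η := by
    have := abs_int_le hp.continuous (hcδ.sub hgs.continuous) (M := η / (I + 1)) (L := 3 * R)
      (fun x hx => by
        change cv (sc ρ δ) g x - g x = 0
        rw [cv_zero (hscz δ hδ0) hgz x (by linarith), hgz x (by linarith), sub_zero])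
      (fun x => by
        have := sc_dist hρz hρn hρ1 hδ0 hgs.continuous (x := x) (z := g x) (e := η / (I + 1)) (by positivity)
          (fun y hy => (hd' (lt_of_lt_of_le hy hδd)).le)
        exact this)
    refine this.trans ?_
    rw [← hI, div_mul_eq_mul_div, div_le_iff₀ (by positivity)]
    nlinarith
  have hi1 : Integrable (fun x => p x * cv (sc ρ R) g x) :=
    int_cs hp.continuous hcR (cv_cs (hscc R hR) hgc)
  have hi2 : Integrable (fun x => p x * cv (sc ρ δ) g x) :=
    int_cs hp.continuous hcδ (cv_cs (hscc δ hδ0) hgc)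
  have hi3 : Integrable (fun x => p x * g x) := int_cs hp.continuous hgs.continuous hgc
  have s1 : ∫ x, p x * (cv (sc ρ δ) g x - g x) = (∫ x, p x * cv (sc ρ δ) g x) - ∫ x, p x * g x := by
    simp only [mul_sub]; exact integral_sub hi2 hi3
  have s2 : ∫ x, p x * (cv (sc ρ R) g x - cv (sc ρ δ) g x) = (∫ x, p x * cv (sc ρ R) g x) - ∫ x, p x * cv (sc ρ δ) g x := by
    simp only [mul_sub]; exact integral_sub hi1 hi2
  have hA' := hA δ hδ0 hδR
  rw [s2] at hA'
  rw [s1] at hL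
  rw [abs_le] at hL hA' hB ⊢
  constructor <;> linarith [hL.1, hL.2, hA'.1, hA'.2, hB.1, hB.2]

lemma pow_int {a : ℝ} (ha : a < 3) {L : ℝ} (hL : 0 < L) :
    IntegrableOn (fun x : R3 => ‖x‖ ^ (-a)) (closedBall 0 L) ∧
    ∫ x in closedBall (0 : R3) L, ‖x‖ ^ (-a) =
      3 * volume.real (ball (0 : R3) 1) * (3 - a)⁻¹ * L ^ (3 - a) := by
  have hI : IntervalIntegrable (fun y : ℝ => y ^ (2 - a)) volume 0 L :=
    intervalIntegral.intervalIntegrable_rpow' (by linarith)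
  have hpt : ∀ y ∈ Set.Ioi (0:ℝ), y ^ 2 * y ^ (-a) = y ^ (2 - a) := by
    intro y hy
    rw [← Real.rpow_natCast, ← Real.rpow_add hy]; congr 1
  have hind : ∀ x : R3, (closedBall (0 : R3) L).indicator (fun x => ‖x‖ ^ (-a)) x =
      (Set.Iic L).indicator (fun y => y ^ (-a)) ‖x‖ := by
    intro x
    by_cases h : ‖x‖ ≤ L
    · rw [Set.indicator_of_mem (by simpa using h), Set.indicator_of_mem (by simpa using h)]
    · rw [Set.indicator_of_notMem (by simpa using h), Set.indicator_of_notMem (by simpa using h)]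
  have hset : ∀ y ∈ Set.Ioi (0:ℝ), y ^ 2 • (Set.Iic L).indicator (fun y => y ^ (-a)) y =
      (Set.Iic L).indicator (fun y => y ^ (2 - a)) y := by
    intro y hy
    by_cases h : y ≤ L
    · rw [Set.indicator_of_mem (by simpa using h), Set.indicator_of_mem (by simpa using h),
        smul_eq_mul, hpt y hy]
    · rw [Set.indicator_of_notMem (by simpa using h), Set.indicator_of_notMem (by simpa using h), smul_zero]
  have hfr : Module.finrank ℝ R3 = 3 := by simp
  have hI2 : IntegrableOn (fun y : ℝ => y ^ (2 - a)) (Set.Ioc 0 L) := by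
    rwa [intervalIntegrable_iff_integrableOn_Ioc_of_le hL.le] at hI
  constructor
  · rw [← integrable_indicator_iff measurableSet_closedBall]
    simp only [funext hind]
    rw [integrable_fun_norm_addHaar volume, hfr]
    refine IntegrableOn.congr_fun ?_ (fun y hy => (hset y hy).symm) measurableSet_Ioi
    rw [IntegrableOn, integrable_indicator_iff measurableSet_Iic, IntegrableOn,
      Measure.restrict_restrict measurableSet_Iic, Set.inter_comm, Set.Ioi_inter_Iic]
    exact hI2
  · rw [← integral_indicator measurableSet_closedBall]
    simp only [hind]
    rw [integral_fun_norm_addHaar volume, hfr]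
    rw [setIntegral_congr_fun measurableSet_Ioi hset, integral_indicator measurableSet_Iic,
      Measure.restrict_restrict measurableSet_Iic, Set.inter_comm, Set.Ioi_inter_Iic,
      ← intervalIntegral.integral_of_le hL.le, integral_rpow (Or.inl (by linarith)),
      Real.zero_rpow (by linarith)]
    simp only [nsmul_eq_mul, smul_eq_mul]
    have : 2 - a + 1 = 3 - a := by ring
    rw [this, sub_zero]
    push_cast; ring

/-- integral bound for a function dominated by a power -/
lemma pow_bd {a : ℝ} (ha : a < 3) : ∃ C : ℝ, 0 ≤ C ∧ ∀ L : ℝ, 0 < L → 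
    IntegrableOn (fun x : R3 => ‖x‖ ^ (-a)) (closedBall 0 L) ∧ 
    ∫ x in closedBall (0 : R3) L, ‖x‖ ^ (-a) ≤ C * L ^ (3 - a) := by
  refine ⟨3 * volume.real (ball (0 : R3) 1) * (3 - a)⁻¹, ?_, fun L hL => ?_⟩
  · have : 0 < 3 - a := by linarith
    positivity
  · exact ⟨(pow_int ha hL).1, (pow_int ha hL).2.le⟩

lemma ae_ne_zero (s : Set R3) : ∀ᵐ x ∂(volume.restrict s), x ≠ 0 := by
  apply ae_restrict_of_ae
  exact Measure.ae_ne volume 0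

lemma int_pow_le {a : ℝ} {f : R3 → ℝ} (hf : Continuous f) {A L I : ℝ} 
    (hi : IntegrableOn (fun x : R3 => ‖x‖ ^ (-a)) (closedBall 0 L)) 
    (hI : ∫ x in closedBall (0 : R3) L, ‖x‖ ^ (-a) ≤ I) (hA : 0 ≤ A)
    (h : ∀ x, x ≠ 0 → f x ≤ A * ‖x‖ ^ (-a)) :
    ∫ x in closedBall (0 : R3) L, f x ≤ A * I := by
  refine le_trans ?_ (mul_le_mul_of_nonneg_left hI hA)
  rw [← integral_const_mul]
  apply integral_mono_ae (ball_int hf L) (hi.const_mul A)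
  filter_upwards [ae_ne_zero (closedBall (0:R3) L)] with x hx using h x hx

lemma vol_ball {L : ℝ} (hL : 0 ≤ L) : volume.real (closedBall (0 : R3) L) =
    L ^ 3 * volume.real (closedBall (0 : R3) 1) := by
  have := Measure.addHaar_real_closedBall' (volume : Measure R3) 0 hL
  simpa using this

/-- cutoff -/
lemma cutoff : ∃ (φ : R3 → ℝ) (A : ℝ), Sm φ ∧ 0 ≤ A ∧ (∀ x, 0 ≤ φ x) ∧ (∀ x, ‖x‖ ≤ 1 → φ x = 1) ∧
    (∀ x, φ x ≤ 1) ∧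
    (∀ x, 2 < ‖x‖ → φ x = 0) ∧ (∀ j x, |pd φ j x| ≤ A) ∧ (∀ x, |lap φ x| ≤ A) ∧
    (∀ j x, ‖x‖ < 1 → pd φ j x = 0) ∧ (∀ x, ‖x‖ < 1 → lap φ x = 0) := by
  set φ : R3 → ℝ := fun x => (fun t => Real.smoothTransition (2 - t)) (‖x‖ ^ 2) with hφ
  have hs : Sm φ := radial_smooth (k := fun t => Real.smoothTransition (2 - t))
    (Real.smoothTransition.contDiff.comp (contDiff_const.sub contDiff_id))
  have hz : ∀ x, 2 < ‖x‖ → φ x = 0 := fun x hx =>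
    Real.smoothTransition.zero_of_nonpos (by nlinarith)
  have h1 : ∀ x, ‖x‖ ≤ 1 → φ x = 1 := fun x hx =>
    Real.smoothTransition.one_of_one_le (by nlinarith [norm_nonneg x])
  have hp : ∀ j x, ‖x‖ < 1 → pd φ j x = 0 := by
    intro j x hx
    have : φ =ᶠ[nhds x] fun _ => 1 := by
      have : {y : R3 | ‖y‖ < 1} ∈ nhds x := (isOpen_lt continuous_norm continuous_const).mem_nhds hx
      filter_upwards [this] with y hy using h1 y (le_of_lt hy)
    simp [pd, this.fderiv_eq]
  have hl : ∀ x, ‖x‖ < 1 → lap φ x = 0 := by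
    intro x hx
    simp only [lap]
    refine Finset.sum_eq_zero fun j _ => ?_
    have : pd φ j =ᶠ[nhds x] fun _ => 0 := by
      have : {y : R3 | ‖y‖ < 1} ∈ nhds x := (isOpen_lt continuous_norm continuous_const).mem_nhds hx
      filter_upwards [this] with y hy using hp j y hy
    simp only [pd] at this ⊢
    simp [this.fderiv_eq]
  obtain ⟨C0, hC0, hC0'⟩ := bdd_cs hs.lap.continuous (cs_of (lap_zero_out hz))
  choose C1 hC1 hC1' using fun j => bdd_cs (hs.pd j).continuous (pd_cs (cs_of hz) j)
  have hS := Finset.sum_nonneg fun j (_ : j ∈ Finset.univ) => hC1 j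
  refine ⟨φ, C0 + ∑ j, C1 j, hs, add_nonneg hC0 hS,
    fun x => Real.smoothTransition.nonneg _, h1, fun x => Real.smoothTransition.le_one _, hz, ?_, ?_, hp, hl⟩
  · intro j x
    have := Finset.single_le_sum (fun j (_ : j ∈ Finset.univ) => hC1 j) (Finset.mem_univ j)
    linarith [hC1' j x]
  · intro x; linarith [hC0' x]

def enH (U V : Fin 3 → R3 → ℝ) (θ : R3 → ℝ) (x : R3) : ℝ :=
  (1/2) * ((∑ i, U i x * U i x) + (∑ i, V i x * V i x) + θ x * θ x)
def enE (U V : Fin 3 → R3 → ℝ) (θ : R3 → ℝ) (x : R3) : ℝ :=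
  (∑ i, ∑ j, pd (U i) j x ^ 2) + (∑ i, ∑ j, pd (V i) j x ^ 2) + ∑ j, pd θ j x ^ 2
def enW (U V : Fin 3 → R3 → ℝ) (θ : R3 → ℝ) (j : Fin 3) (x : R3) : ℝ :=
  U j x * enH U V θ x + V j x * (∑ i, U i x * V i x) + θ x * V j x

section
variable {U V : Fin 3 → R3 → ℝ} {p θ : R3 → ℝ} (hU : ∀ i, Sm (U i)) (hV : ∀ i, Sm (V i))
  (hp : Sm p) (hθ : Sm θ)

lemma enH_smooth (hU : ∀ i, Sm (U i)) (hV : ∀ i, Sm (V i)) (hθ : Sm θ) : Sm (enH U V θ) := by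
  unfold enH
  exact contDiff_const.mul (((ContDiff.sum fun i _ => (hU i).mul (hU i)).add
    (ContDiff.sum fun i _ => (hV i).mul (hV i))).add (hθ.mul hθ))

lemma enS_smooth (hU : ∀ i, Sm (U i)) (hV : ∀ i, Sm (V i)) : Sm (fun x => ∑ i, U i x * V i x) :=
  ContDiff.sum fun i _ => (hU i).mul (hV i)

lemma enW_smooth (hU : ∀ i, Sm (U i)) (hV : ∀ i, Sm (V i)) (hθ : Sm θ) (j : Fin 3) :
    Sm (enW U V θ j) := by
  unfold enW
  exact (((hU j).mul (enH_smooth hU hV hθ)).add ((hV j).mul (enS_smooth hU hV))).add (hθ.mul (hV j))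

lemma pd_S (hU : ∀ i, Sm (U i)) (hV : ∀ i, Sm (V i)) (j : Fin 3) : pd (fun x => ∑ i, U i x * V i x) j =
    fun x => ∑ i, (U i x * pd (V i) j x + V i x * pd (U i) j x) := by
  rw [pd_sum _ (fun i => (hU i).mul (hV i))]
  simp only [pd_mul (hU _) (hV _)]

lemma pd_H (hU : ∀ i, Sm (U i)) (hV : ∀ i, Sm (V i)) (hθ : Sm θ) (j : Fin 3) : pd (enH U V θ) j =
    fun x => (∑ i, U i x * pd (U i) j x) + (∑ i, V i x * pd (V i) j x) + θ x * pd θ j x := by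
  unfold enH
  rw [pd_const_mul (((enS_smooth hU hU).add (enS_smooth hV hV)).add (hθ.mul hθ)),
    pd_add ((enS_smooth hU hU).add (enS_smooth hV hV)) (hθ.mul hθ),
    pd_add (enS_smooth hU hU) (enS_smooth hV hV), pd_S hU hU, pd_S hV hV, pd_mul hθ hθ]
  funext x
  simp only [Fin.sum_univ_three]
  ring

lemma lap_H (hU : ∀ i, Sm (U i)) (hV : ∀ i, Sm (V i)) (hθ : Sm θ) (x : R3) : lap (enH U V θ) x =
    enE U V θ x + (∑ i, U i x * lap (U i) x) + (∑ i, V i x * lap (V i) x) + θ x * lap θ x := by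
  have key : ∀ j, pd (pd (enH U V θ) j) j x = (∑ i, (U i x * pd (pd (U i) j) j x + pd (U i) j x * pd (U i) j x))
     + (∑ i, (V i x * pd (pd (V i) j) j x + pd (V i) j x * pd (V i) j x))
     + (θ x * pd (pd θ j) j x + pd θ j x * pd θ j x) := by
    intro j
    have h1 := enS_smooth hU (fun i => (hU i).pd j)
    have h2 := enS_smooth hV (fun i => (hV i).pd j)
    rw [pd_H hU hV hθ, pd_add (h1.add h2) (hθ.mul (hθ.pd j)), pd_add h1 h2,
      pd_S hU (fun i => (hU i).pd j), pd_S hV (fun i => (hV i).pd j), pd_mul hθ (hθ.pd j)]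
  simp only [lap, key, enE, Fin.sum_univ_three]
  ring

lemma energy_pt (hU : ∀ i, Sm (U i)) (hV : ∀ i, Sm (V i)) (hp : Sm p) (hθ : Sm θ)
    (h1 : ∀ i x, -lap (U i) x + (∑ j, U j x * pd (U i) j x)
      + pd p i x + (∑ j, pd (fun y => V j y * V i y) j x) = 0)
    (h2 : ∀ i x, -lap (V i) x + (∑ j, U j x * pd (V i) j x)
      + pd θ i x + (∑ j, V j x * pd (U i) j x) = 0)
    (h3 : ∀ x, -lap θ x + (∑ j, U j x * pd θ j x) + (∑ j, pd (V j) j x) = 0)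
    (h4 : ∀ x, (∑ j, pd (U j) j x) = 0) (x : R3) :
    enE U V θ x = lap (enH U V θ) x - ∑ j, (pd (enW U V θ j) j x + U j x * pd p j x) := by
  have hW : ∀ j, pd (enW U V θ j) j x = (U j x * pd (enH U V θ) j x + enH U V θ x * pd (U j) j x)
      + (V j x * (∑ i, (U i x * pd (V i) j x + V i x * pd (U i) j x)) + (∑ i, U i x * V i x) * pd (V j) j x)
      + (θ x * pd (V j) j x + V j x * pd θ j x) := by
    intro j
    have hH := enH_smooth hU hV hθ
    have hS := enS_smooth hU hV
    have : enW U V θ j = fun x => (U j x * enH U V θ x + V j x * (fun x => ∑ i, U i x * V i x) x) + θ x * V j x := rfl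
    rw [this, pd_add (((hU j).mul hH).add ((hV j).mul hS)) (hθ.mul (hV j)),
      pd_add ((hU j).mul hH) ((hV j).mul hS), pd_mul (hU j) hH, pd_mul (hV j) hS, pd_S hU hV,
      pd_mul hθ (hV j)]
  have g1 := fun i => h1 i x
  have g2 := fun i => h2 i x
  have g3 := h3 x
  have g4 := h4 x
  simp only [pd_mul (hV _) (hV _)] at g1
  rw [lap_H hU hV hθ]
  simp only [hW, pd_H hU hV hθ]
  generalize enH U V θ x = HH
  simp only [Fin.sum_univ_three] at g1 g2 g3 g4 ⊢
  linear_combination U 0 x * g1 0 + U 1 x * g1 1 + U 2 x * g1 2 + V 0 x * g2 0 + V 1 x * g2 1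
    + V 2 x * g2 2 + θ x * g3 + HH * g4

lemma energy_int (hU : ∀ i, Sm (U i)) (hV : ∀ i, Sm (V i)) (hp : Sm p) (hθ : Sm θ)
    (h1 : ∀ i x, -lap (U i) x + (∑ j, U j x * pd (U i) j x)
      + pd p i x + (∑ j, pd (fun y => V j y * V i y) j x) = 0)
    (h2 : ∀ i x, -lap (V i) x + (∑ j, U j x * pd (V i) j x)
      + pd θ i x + (∑ j, V j x * pd (U i) j x) = 0)
    (h3 : ∀ x, -lap θ x + (∑ j, U j x * pd θ j x) + (∑ j, pd (V j) j x) = 0)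
    (h4 : ∀ x, (∑ j, pd (U j) j x) = 0) {φ : R3 → ℝ} (hφ : Sm φ) (hc : HasCompactSupport φ) :
    ∫ x, enE U V θ x * φ x = (∫ x, enH U V θ x * lap φ x) + (∑ j, ∫ x, enW U V θ j x * pd φ j x)
      + ∫ x, p x * ∑ j, pd (fun y => φ y * U j y) j x := by
  have hH := enH_smooth hU hV hθ
  have hW := enW_smooth hU hV hθ
  have e1 : ∀ x, enE U V θ x * φ x = lap (enH U V θ) x * φ x - ∑ j, (pd (enW U V θ j) j x * φ x + pd p j x * (φ x * U j x)) := by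
    intro x
    rw [energy_pt hU hV hp hθ h1 h2 h3 h4, sub_mul, Finset.sum_mul]
    congr 1
    exact Finset.sum_congr rfl fun j _ => by ring
  have i1 : Integrable (fun x => lap (enH U V θ) x * φ x) := int_cs hH.lap.continuous hφ.continuous hc
  have i2 : ∀ j, Integrable (fun x => pd (enW U V θ j) j x * φ x) := fun j =>
    int_cs ((hW j).pd j).continuous hφ.continuous hc
  have hs : ∀ j, Sm (fun x => φ x * U j x) := fun j => hφ.mul (hU j)
  have hsc : ∀ j, HasCompactSupport (fun x => φ x * U j x) := fun j => hc.mul_right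
  have i3 : ∀ j, Integrable (fun x => pd p j x * (φ x * U j x)) := fun j =>
    int_cs (hp.pd j).continuous (hs j).continuous (hsc j)
  have i4 : ∀ j, Integrable (fun x => pd (enW U V θ j) j x * φ x + pd p j x * (φ x * U j x)) :=
    fun j => (i2 j).add (i3 j)
  simp only [e1]
  rw [integral_sub i1 (integrable_finsetSum _ fun j _ => i4 j), integral_finsetSum _ (fun j _ => i4 j)]
  simp only [fun j => integral_add (i2 j) (i3 j)]
  rw [Finset.sum_add_distrib, ← ibp_lap hH hφ hc]
  have e2 : ∀ j, ∫ x, pd (enW U V θ j) j x * φ x = - ∫ x, enW U V θ j x * pd φ j x := fun j => by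
    rw [ibp (hW j) hφ hc, neg_neg]
  have e3 : ∀ j, ∫ x, pd p j x * (φ x * U j x) = - ∫ x, p x * pd (fun y => φ y * U j y) j x := fun j => by
    rw [ibp hp (hs j) (hsc j), neg_neg]
  simp only [e2, e3, Finset.mul_sum]
  rw [integral_finsetSum _ (fun j _ => int_cs hp.continuous ((hs j).pd j).continuous (pd_cs (hsc j) j))]
  simp only [Finset.sum_neg_distrib]
  ring
end

lemma near_bd {a : ℝ} (ha : 0 ≤ a) {f : R3 → ℝ} (hf : Continuous f) (K : ℝ) :
    ∃ B, 0 ≤ B ∧ ∀ x, x ≠ 0 → ‖x‖ ≤ K → |f x| ≤ B * ‖x‖ ^ (-a) := by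
  obtain ⟨S, hS⟩ := (isCompact_closedBall (0 : R3) K).exists_bound_of_continuousOn hf.continuousOn
  refine ⟨|S| * |K| ^ a, by positivity, fun x hx hK => ?_⟩
  have h0 : 0 < ‖x‖ := norm_pos_iff.mpr hx
  have h1 := hS x (by simpa using hK)
  rw [Real.norm_eq_abs] at h1
  have h2 : ‖x‖ ^ a ≤ |K| ^ a := Real.rpow_le_rpow h0.le (hK.trans (le_abs_self K)) ha
  have h3 : 1 ≤ |K| ^ a * ‖x‖ ^ (-a) := by
    rw [Real.rpow_neg h0.le, ← div_eq_mul_inv, one_le_div (Real.rpow_pos_of_pos h0 a)]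
    exact h2
  calc |f x| ≤ |S| * 1 := by rw [mul_one]; exact h1.trans (le_abs_self S)
    _ ≤ |S| * (|K| ^ a * ‖x‖ ^ (-a)) := mul_le_mul_of_nonneg_left h3 (abs_nonneg S)
    _ = _ := by ring

lemma far_bd {a t e : ℝ} {x : R3} (hx : x ≠ 0) (h : ‖x‖ ^ a * t ≤ e) : t ≤ e * ‖x‖ ^ (-a) := by
  have h0 : 0 < ‖x‖ := norm_pos_iff.mpr hx
  rw [Real.rpow_neg h0.le, ← div_eq_mul_inv, le_div_iff₀ (Real.rpow_pos_of_pos h0 a)]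
  linarith

lemma pow3 {a : ℝ} (n : ℕ) (ha : a < 3) (hn : 3 * (3 - a) = n) : ∃ C : ℝ, 0 ≤ C ∧ ∀ r : ℝ, 0 < r →
    IntegrableOn (fun x : R3 => ‖x‖ ^ (-a)) (closedBall 0 (3 * r ^ 3)) ∧
    ∫ x in closedBall (0 : R3) (3 * r ^ 3), ‖x‖ ^ (-a) ≤ C * r ^ n := by
  obtain ⟨C, hC, h⟩ := pow_bd ha
  refine ⟨C * 3 ^ (3 - a), by positivity, fun r hr => ?_⟩
  obtain ⟨h1, h2⟩ := h (3 * r ^ 3) (by positivity)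
  refine ⟨h1, h2.trans (le_of_eq ?_)⟩
  rw [Real.mul_rpow (by norm_num) (by positivity), ← Real.rpow_natCast r 3, ← Real.rpow_mul hr.le]
  push_cast
  rw [hn, Real.rpow_natCast, mul_assoc]

lemma pow_dec {x : R3} {r s a : ℝ} (n : ℕ) (ha : 0 ≤ a) (hn : 3 * a = n) (hr : 0 < r) (hrs : r * s = 1)
    (hx : r ^ 3 ≤ ‖x‖) : ‖x‖ ^ (-a) ≤ s ^ n := by
  have hs : s = r⁻¹ := eq_inv_of_mul_eq_one_right hrs
  have h1 : ‖x‖ ^ (-a) ≤ (r ^ 3) ^ (-a) :=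
    Real.rpow_le_rpow_of_nonpos (by positivity) hx (by linarith)
  refine h1.trans (le_of_eq ?_)
  rw [← Real.rpow_natCast r 3, ← Real.rpow_mul hr.le, hs, inv_pow, ← Real.rpow_natCast r n, ← hn,
    ← Real.rpow_neg hr.le]
  push_cast
  congr 1; ring

lemma vol_bd {f : R3 → ℝ} (hf : Continuous f) {L K : ℝ} (hL : 0 ≤ L) (hz : ∀ x, L < ‖x‖ → f x = 0)
    (hK : ∀ x, |f x| ≤ K) : |∫ x, f x| ≤ K * (L ^ 3 * volume.real (closedBall (0 : R3) 1)) := by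
  have h := abs_int_le (a := fun _ => 1) continuous_const hf hz hK
  simp only [one_mul, abs_one] at h
  rw [← vol_ball hL]
  simpa using h

def Cut (φ : R3 → ℝ) (A : ℝ) : Prop := Sm φ ∧ 0 ≤ A ∧ (∀ x, 0 ≤ φ x) ∧ (∀ x, ‖x‖ ≤ 1 → φ x = 1) ∧
    (∀ x, φ x ≤ 1) ∧
    (∀ x, 2 < ‖x‖ → φ x = 0) ∧ (∀ j x, |pd φ j x| ≤ A) ∧ (∀ x, |lap φ x| ≤ A) ∧
    (∀ j x, ‖x‖ < 1 → pd φ j x = 0) ∧ (∀ x, ‖x‖ < 1 → lap φ x = 0)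

lemma cut_scale {φ : R3 → ℝ} {A : ℝ} (h : Cut φ A) {r s : ℝ} (hr : 0 < r) (hrs : r * s = 1)
    {ψ : R3 → ℝ} (hψ : ψ = fun x => φ (s ^ 3 • x)) :
    Sm ψ ∧ (∀ x, 0 ≤ ψ x) ∧ (∀ x, ‖x‖ ≤ r ^ 3 → ψ x = 1) ∧ (∀ x, ψ x ≤ 1) ∧
    (∀ x, 2 * r ^ 3 < ‖x‖ → ψ x = 0) ∧ (∀ j x, |pd ψ j x| ≤ A * s ^ 3) ∧ (∀ x, |lap ψ x| ≤ A * s ^ 6) ∧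
    (∀ j x, ‖x‖ < r ^ 3 → pd ψ j x = 0) ∧ (∀ x, ‖x‖ < r ^ 3 → lap ψ x = 0) := by
  obtain ⟨hs, hA, h0, h1, hle, hz, hp, hl, hp0, hl0⟩ := h
  have hs' : s = r⁻¹ := eq_inv_of_mul_eq_one_right hrs
  have s0 : 0 < s := by rw [hs']; positivity
  have nm : ∀ x : R3, ‖s ^ 3 • x‖ = s ^ 3 * ‖x‖ := fun x => by
    rw [norm_smul, Real.norm_of_nonneg (by positivity)]
  have e : s ^ 3 * r ^ 3 = 1 := by rw [← mul_pow, mul_comm, hrs, one_pow]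
  have s3 : 0 < s ^ 3 := by positivity
  have lt1 : ∀ x : R3, ‖x‖ < r ^ 3 → ‖s ^ 3 • x‖ < 1 := fun x hx => by
    rw [nm, ← e]; exact mul_lt_mul_of_pos_left hx s3
  subst hψ
  refine ⟨hs.scale _, fun x => h0 _, fun x hx => h1 _ ?_, fun x => hle _, fun x hx => hz _ ?_, ?_, ?_, ?_, ?_⟩
  · rw [nm, ← e]; exact mul_le_mul_of_nonneg_left hx s3.le
  · rw [nm]; nlinarith
  · intro j x
    rw [pd_scale hs]
    simp only
    rw [abs_mul, abs_of_pos s3, mul_comm]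
    exact mul_le_mul_of_nonneg_right (hp _ _) s3.le
  · intro x
    rw [lap_scale hs]
    simp only
    rw [abs_mul, abs_of_pos (by positivity), mul_comm, ← pow_mul]
    exact mul_le_mul_of_nonneg_right (hl _) (by positivity)
  · intro j x hx
    rw [pd_scale hs]
    simp only
    rw [hp0 _ _ (lt1 x hx), mul_zero]
  · intro x hx
    rw [lap_scale hs]
    simp only
    rw [hl0 _ (lt1 x hx), mul_zero]

section
variable {U V : Fin 3 → R3 → ℝ} {p θ : R3 → ℝ}

lemma enH_bd {x : R3} {a : ℝ} (hU : ∀ i, |U i x| ≤ a) (hV : ∀ i, |V i x| ≤ a) (hθ : |θ x| ≤ a) :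
    |enH U V θ x| ≤ 4 * a ^ 2 := by
  have sq : ∀ t : ℝ, |t| ≤ a → t * t ≤ a ^ 2 := fun t ht => by
    rw [← sq, ← sq_abs]; exact pow_le_pow_left₀ (abs_nonneg _) ht 2
  have a2 := sq_nonneg a
  simp only [enH, Fin.sum_univ_three]
  rw [abs_of_nonneg (by nlinarith [mul_self_nonneg (U 0 x), mul_self_nonneg (U 1 x), mul_self_nonneg (U 2 x), mul_self_nonneg (V 0 x), mul_self_nonneg (V 1 x), mul_self_nonneg (V 2 x), mul_self_nonneg (θ x)])]
  linarith [sq _ (hU 0), sq _ (hU 1), sq _ (hU 2), sq _ (hV 0), sq _ (hV 1), sq _ (hV 2), sq _ hθ]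

lemma enW_bd {x : R3} {a b c : ℝ} (hU : ∀ i, |U i x| ≤ b) (hb : b ≤ a) (hV : ∀ i, |V i x| ≤ a)
    (hθ : |θ x| ≤ c) (hc : c ≤ a) (hcb : c ≤ a * b) (j : Fin 3) :
    |enW U V θ j x| ≤ 8 * a ^ 2 * b := by
  have hb0 : 0 ≤ b := (abs_nonneg _).trans (hU 0)
  have ha0 : 0 ≤ a := hb0.trans hb
  have hH := enH_bd (U := U) (V := V) (θ := θ) (fun i => (hU i).trans hb) hV (hθ.trans hc)
  have m := fun i => mul_le_mul (hU i) (hV i) (abs_nonneg _) hb0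
  have hS : |∑ i, U i x * V i x| ≤ 3 * (b * a) := by
    refine (Finset.abs_sum_le_sum_abs _ _).trans ?_
    simp only [Fin.sum_univ_three, abs_mul]
    linarith [m 0, m 1, m 2]
  have k1 := mul_le_mul (hU j) hH (abs_nonneg _) hb0
  have k2 := mul_le_mul (hV j) hS (abs_nonneg _) ha0
  have k3 := mul_le_mul (hθ.trans hcb) (hV j) (abs_nonneg _) (by positivity)
  simp only [enW]
  refine (abs_add_le _ _).trans ((add_le_add_left (abs_add_le _ _) _).trans ?_)
  rw [abs_mul, abs_mul, abs_mul]
  linarith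

lemma T1 {ψ : R3 → ℝ} {A a r s : ℝ} (hA : 0 ≤ A) (hr : 0 < r)
    (hU : ∀ i, Sm (U i)) (hV : ∀ i, Sm (V i)) (hθ : Sm θ) (hψ : Sm ψ)
    (hz : ∀ x, 2 * r ^ 3 < ‖x‖ → ψ x = 0) (hl : ∀ x, |lap ψ x| ≤ A)
    (hl0 : ∀ x, ‖x‖ < r ^ 3 → lap ψ x = 0)
    (bU : ∀ i x, r ^ 3 ≤ ‖x‖ → |U i x| ≤ a) (bV : ∀ i x, r ^ 3 ≤ ‖x‖ → |V i x| ≤ a)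
    (bθ : ∀ x, r ^ 3 ≤ ‖x‖ → |θ x| ≤ a) :
    |∫ x, enH U V θ x * lap ψ x| ≤ 4 * a ^ 2 * A * ((2 * r ^ 3) ^ 3 * volume.real (closedBall (0 : R3) 1)) := by
  refine vol_bd (f := fun x => enH U V θ x * lap ψ x) ((enH_smooth hU hV hθ).continuous.mul hψ.lap.continuous) (by positivity)
    (fun x hx => by rw [lap_zero_out hz x hx, mul_zero]) (fun x => ?_)
  by_cases hx : ‖x‖ < r ^ 3
  · rw [hl0 x hx, mul_zero, abs_zero]; positivity
  · push Not at hx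
    rw [abs_mul]
    exact mul_le_mul (enH_bd (fun i => bU i x hx) (fun i => bV i x hx) (bθ x hx)) (hl x) (abs_nonneg _) (by positivity)

lemma T2 {ψ : R3 → ℝ} {A a b c r s : ℝ} (hA : 0 ≤ A) (hr : 0 < r) (hb : b ≤ a) (hc : c ≤ a) (hcb : c ≤ a * b)
    (b0 : 0 ≤ b)
    (hU : ∀ i, Sm (U i)) (hV : ∀ i, Sm (V i)) (hθ : Sm θ) (hψ : Sm ψ)
    (hz : ∀ x, 2 * r ^ 3 < ‖x‖ → ψ x = 0) (hl : ∀ j x, |pd ψ j x| ≤ A)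
    (hl0 : ∀ j x, ‖x‖ < r ^ 3 → pd ψ j x = 0)
    (bU : ∀ i x, r ^ 3 ≤ ‖x‖ → |U i x| ≤ b) (bV : ∀ i x, r ^ 3 ≤ ‖x‖ → |V i x| ≤ a)
    (bθ : ∀ x, r ^ 3 ≤ ‖x‖ → |θ x| ≤ c) (j : Fin 3) :
    |∫ x, enW U V θ j x * pd ψ j x| ≤ 8 * a ^ 2 * b * A * ((2 * r ^ 3) ^ 3 * volume.real (closedBall (0 : R3) 1)) := by
  refine vol_bd (f := fun x => enW U V θ j x * pd ψ j x) ((enW_smooth hU hV hθ j).continuous.mul (hψ.pd j).continuous) (by positivity)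
    (fun x hx => by rw [pd_zero_out hz j x hx, mul_zero]) (fun x => ?_)
  by_cases hx : ‖x‖ < r ^ 3
  · rw [hl0 j x hx, mul_zero, abs_zero]; positivity
  · push Not at hx
    rw [abs_mul]
    exact mul_le_mul (enW_bd (fun i => bU i x hx) hb (fun i => bV i x hx) (bθ x hx) hc hcb j) (hl j x) (abs_nonneg _) (by positivity)

lemma div_g {ψ : R3 → ℝ} (hU : ∀ i, Sm (U i)) (hψ : Sm ψ) (h4 : ∀ x, ∑ j, pd (U j) j x = 0) (x : R3) :
    ∑ j, pd (fun y => ψ y * U j y) j x = ∑ j, U j x * pd ψ j x := by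
  simp only [pd_mul hψ (hU _), Finset.sum_add_distrib, ← Finset.mul_sum, h4, mul_zero, zero_add]

lemma mom (hU : ∀ i, Sm (U i)) (hV : ∀ i, Sm (V i))
    (h1 : ∀ i x, -lap (U i) x + (∑ j, U j x * pd (U i) j x) + pd p i x
      + (∑ j, pd (fun y => V j y * V i y) j x) = 0)
    (h4 : ∀ x, ∑ j, pd (U j) j x = 0) (i : Fin 3) (x : R3) :
    pd p i x = lap (U i) x - ∑ j, pd (fun y => U j y * U i y + V j y * V i y) j x := by
  have e : ∀ j, pd (fun y => U j y * U i y + V j y * V i y) j x =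
      (U j x * pd (U i) j x + U i x * pd (U j) j x) + pd (fun y => V j y * V i y) j x := fun j => by
    rw [pd_add ((hU j).mul (hU i)) ((hV j).mul (hV i)), pd_mul (hU j) (hU i)]
  simp only [e, Finset.sum_add_distrib, ← Finset.mul_sum, h4, mul_zero]
  linarith [h1 i x]
end

section
variable {U V : Fin 3 → R3 → ℝ} {p θ : R3 → ℝ}

set_option maxHeartbeats 2000000 in
lemma main_est {φ : R3 → ℝ} {A M : ℝ} (hcut : Cut φ A) (hM : 1 ≤ M)
    (hU : ∀ i, Sm (U i)) (hV : ∀ i, Sm (V i)) (hp : Sm p) (hθ : Sm θ)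
    (h1 : ∀ i x, -lap (U i) x + (∑ j, U j x * pd (U i) j x) + pd p i x
      + (∑ j, pd (fun y => V j y * V i y) j x) = 0)
    (h2 : ∀ i x, -lap (V i) x + (∑ j, U j x * pd (V i) j x) + pd θ i x
      + (∑ j, V j x * pd (U i) j x) = 0)
    (h3 : ∀ x, -lap θ x + (∑ j, U j x * pd θ j x) + (∑ j, pd (V j) j x) = 0)
    (h4 : ∀ x, ∑ j, pd (U j) j x = 0)
    (gU : ∀ i x, x ≠ 0 → |U i x| ≤ M * ‖x‖ ^ (-(2/3:ℝ)))
    (gV : ∀ i x, x ≠ 0 → |V i x| ≤ M * ‖x‖ ^ (-(2/3:ℝ))) :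
    ∃ C, 0 ≤ C ∧ ∀ ε B r s, 0 < ε → ε ≤ 1 → 0 ≤ B → 1 ≤ r → r * s = 1 →
      (∀ i x, x ≠ 0 → |U i x| ≤ ε * ‖x‖ ^ (-(2/3:ℝ)) + B * ‖x‖ ^ (-(1:ℝ))) →
      (∀ i x, r ^ 3 ≤ ‖x‖ → |U i x| ≤ ε * s ^ 2) → (∀ i x, r ^ 3 ≤ ‖x‖ → |V i x| ≤ M * s ^ 2) →
      (∀ x, r ^ 3 ≤ ‖x‖ → |θ x| ≤ ε * s ^ 4) →
      ∫ x, enE U V θ x * φ (s ^ 3 • x) ≤ C * (ε + (1 + B) * s) := by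
  obtain ⟨C7, C70, hC7⟩ := pow3 (a := 2/3) 7 (by norm_num) (by norm_num)
  obtain ⟨C6, C60, hC6⟩ := pow3 (a := 1) 6 (by norm_num) (by norm_num)
  obtain ⟨C5, C50, hC5⟩ := pow3 (a := 4/3) 5 (by norm_num) (by norm_num)
  obtain ⟨C1, C10, hC1⟩ := pow3 (a := 8/3) 1 (by norm_num) (by norm_num)
  obtain ⟨C3, C30, hC3⟩ := press
  have hA := hcut.2.1
  set v := volume.real (closedBall (0 : R3) 1) with hv
  have v0 : 0 ≤ v := measureReal_nonneg
  have M0 : 0 ≤ M := by linarith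
  set F : Fin 3 → Fin 3 → R3 → ℝ := fun i j y => U j y * U i y + V j y * V i y with hF
  have hFs : ∀ i j, Sm (F i j) := fun i j => ((hU j).mul (hU i)).add ((hV j).mul (hV i))
  have gF : ∀ i j x, x ≠ 0 → |F i j x| ≤ 2 * M ^ 2 * ‖x‖ ^ (-(4/3:ℝ)) := by
    intro i j x hx
    have h0 : 0 < ‖x‖ := norm_pos_iff.mpr hx
    have e : ‖x‖ ^ (-(2/3:ℝ)) * ‖x‖ ^ (-(2/3:ℝ)) = ‖x‖ ^ (-(4/3:ℝ)) := by
      rw [← Real.rpow_add h0]; norm_num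
    have p0 : 0 ≤ M * ‖x‖ ^ (-(2/3:ℝ)) := by positivity
    have k1 := mul_le_mul (gU j x hx) (gU i x hx) (abs_nonneg _) p0
    have k2 := mul_le_mul (gV j x hx) (gV i x hx) (abs_nonneg _) p0
    rw [← abs_mul] at k1 k2
    refine (abs_add_le _ _).trans ((add_le_add k1 k2).trans (le_of_eq ?_))
    rw [← e]; ring
  have gF2 : ∀ i j x, x ≠ 0 → (F i j x) ^ 2 ≤ 4 * M ^ 4 * ‖x‖ ^ (-(8/3:ℝ)) := by
    intro i j x hx
    have h0 : 0 < ‖x‖ := norm_pos_iff.mpr hx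
    have e : ‖x‖ ^ (-(4/3:ℝ)) * ‖x‖ ^ (-(4/3:ℝ)) = ‖x‖ ^ (-(8/3:ℝ)) := by
      rw [← Real.rpow_add h0]; norm_num
    rw [← sq_abs]
    refine (pow_le_pow_left₀ (abs_nonneg _) (gF i j x hx) 2).trans (le_of_eq ?_)
    rw [← e]; ring
  refine ⟨32 * M^2 * A * v + 192 * M^2 * A * v + 18 * M^4 * C1 + 486 * A^2 * v + 3 * C3 * M^2 * C7^2
      + 18 * C3 * M^2 * C5 * C7 + 18 * C3 * M^2 * C5 * C6, by positivity, ?_⟩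
  intro ε B r s ε0 ε1 B0 hr1 hrs bUe bU bV bθ
  have r0 : 0 < r := by linarith
  have s0 : 0 < s := by
    have hs' : s = r⁻¹ := eq_inv_of_mul_eq_one_right hrs
    rw [hs']; positivity
  have s1 : s ≤ 1 := by nlinarith
  set ψ : R3 → ℝ := fun x => φ (s ^ 3 • x) with hψd
  obtain ⟨hψ, ψ0, ψ1, ψle, ψz, ψp, ψl, ψp0, ψl0⟩ := cut_scale hcut r0 hrs hψd
  have hE := energy_int hU hV hp hθ h1 h2 h3 h4 hψ (cs_of ψz)
  have εM : ε ≤ M := by linarith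
  have s42 : s ^ 4 ≤ s ^ 2 := pow_le_pow_of_le_one s0.le s1 (by norm_num)
  have cθ : ε * s ^ 4 ≤ M * s ^ 2 := mul_le_mul εM s42 (by positivity) M0
  have cU : ε * s ^ 2 ≤ M * s ^ 2 := mul_le_mul_of_nonneg_right εM (by positivity)
  have t1 := T1 (s := s) (mul_nonneg hA (by positivity)) r0 hU hV hθ hψ ψz ψl ψl0
    (fun i x hx => (bU i x hx).trans cU) bV (fun x hx => (bθ x hx).trans cθ)
  have hcb : ε * s ^ 4 ≤ M * s ^ 2 * (ε * s ^ 2) := by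
    have : ε * s ^ 4 ≤ M * (ε * s ^ 4) := le_mul_of_one_le_left (by positivity) hM
    linarith
  have t2 := fun j => T2 (s := s) (mul_nonneg hA (by positivity)) r0 cU cθ hcb (by positivity) hU hV hθ hψ ψz ψp ψp0
    bU bV bθ j
  have hm : ∀ x, |∑ i, pd (fun y => ψ y * U i y) i x| ≤ 3 * A * ε * s ^ 5 := by
    intro x
    rw [div_g hU hψ h4]
    by_cases hx : ‖x‖ < r ^ 3
    · simp only [ψp0 _ x hx, mul_zero, Finset.sum_const_zero, abs_zero]; positivity
    · push Not at hx
      have k := fun j => mul_le_mul (bU j x hx) (ψp j x) (abs_nonneg _) (by positivity)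
      refine (Finset.abs_sum_le_sum_abs _ _).trans ?_
      simp only [Fin.sum_univ_three, abs_mul]
      linarith [k 0, k 1, k 2]
  have t3 := hC3 p U F (fun i y => ψ y * U i y) (3 * A * ε * s ^ 5) (ε * s) (r ^ 3) hp hU hFs
    (mom hU hV h1 h4) h4 (fun i => hψ.mul (hU i)) (by positivity) (by positivity)
    (fun i x hx => by rw [ψz x hx, zero_mul]) hm
  obtain ⟨i7, I7⟩ := hC7 r r0
  obtain ⟨i6, I6⟩ := hC6 r r0
  obtain ⟨i5, I5⟩ := hC5 r r0
  obtain ⟨i1, I1⟩ := hC1 r r0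
  have f2 : ∀ i j, ∫ x in closedBall 0 (3 * r^3), (F i j x)^2 ≤ 4 * M^4 * (C1 * r ^ 1) := fun i j =>
    int_pow_le (f := fun x => (F i j x)^2) ((hFs i j).continuous.pow 2) i1 I1 (by positivity) (gF2 i j)
  have f1 : ∀ i j, ∫ x in closedBall 0 (3 * r^3), |F i j x| ≤ 2 * M^2 * (C5 * r ^ 5) := fun i j =>
    int_pow_le (f := fun x => |F i j x|) (hFs i j).continuous.abs i5 I5 (by positivity) (gF i j)
  have u1 : ∀ i, ∫ x in closedBall 0 (3 * r^3), |U i x| ≤ M * (C7 * r ^ 7) := fun i =>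
    int_pow_le (f := fun x => |U i x|) (hU i).continuous.abs i7 I7 M0 (gU i)
  have u2 : ∀ i, ∫ x in closedBall 0 (3 * r^3), |U i x| ≤ ε * (C7 * r ^ 7) + B * (C6 * r ^ 6) := by
    intro i
    have k : ∫ x in closedBall (0:R3) (3 * r^3), |U i x| ≤
        ∫ x in closedBall (0:R3) (3 * r^3), (ε * ‖x‖ ^ (-(2/3:ℝ)) + B * ‖x‖ ^ (-(1:ℝ))) := by
      apply integral_mono_ae (ball_int (hU i).continuous.abs _) ((i7.const_mul ε).add (i6.const_mul B))
      filter_upwards [ae_ne_zero (closedBall (0:R3) (3 * r^3))] with x hx using bUe i x hx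
    rw [integral_add (i7.const_mul ε) (i6.const_mul B), integral_const_mul, integral_const_mul] at k
    have := mul_le_mul_of_nonneg_left I7 ε0.le
    have := mul_le_mul_of_nonneg_left I6 B0
    linarith
  have hh : ∀ i, ∫ x, |ψ x * U i x| ≤ ∫ x in closedBall 0 (3 * r^3), |U i x| := by
    intro i
    rw [int_to_ball (L := 3 * r^3) (f := fun x => |ψ x * U i x|) (fun x hx => by
      rw [ψz x (by nlinarith [pow_pos r0 3]), zero_mul, abs_zero])]
    apply integral_mono (ball_int (hψ.mul (hU i)).continuous.abs _) (ball_int (hU i).continuous.abs _)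
    intro x
    simp only
    rw [abs_mul, abs_of_nonneg (ψ0 x)]
    exact mul_le_of_le_one_left (abs_nonneg _) (ψle x)
  have R1 : (r ^ 3)⁻¹ = s ^ 3 := by
    rw [eq_inv_of_mul_eq_one_right hrs, inv_pow]
  have h0 : ∀ i, 0 ≤ ∫ x, |ψ x * U i x| := fun i => integral_nonneg fun x => abs_nonneg _
  have U0 : ∀ i, 0 ≤ ∫ x in closedBall 0 (3 * r^3), |U i x| := fun i => integral_nonneg fun x => abs_nonneg _
  have F0 : ∀ i j, 0 ≤ ∫ x in closedBall 0 (3 * r^3), |F i j x| := fun i j => integral_nonneg fun x => abs_nonneg _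
  have a1 : (ε * s)/2 * (∑ i, ∑ j, ∫ x in closedBall 0 (3 * r^3), (F i j x)^2) ≤ 18 * M^4 * C1 * ε := by
    have : (∑ i, ∑ j, ∫ x in closedBall 0 (3 * r^3), (F i j x)^2) ≤ ∑ i : Fin 3, ∑ j : Fin 3, 4 * M^4 * (C1 * r ^ 1) :=
      Finset.sum_le_sum fun i _ => Finset.sum_le_sum fun j _ => f2 i j
    refine (mul_le_mul_of_nonneg_left this (by positivity)).trans (le_of_eq ?_)
    simp only [Finset.sum_const, Finset.card_univ, Fintype.card_fin, nsmul_eq_mul]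
    push_cast
    linear_combination 18 * M^4 * C1 * ε * hrs
  have rs9 : r ^ 9 * s ^ 9 = 1 := by rw [← mul_pow, hrs, one_pow]
  have rs12 : r ^ 12 * s ^ 12 = 1 := by rw [← mul_pow, hrs, one_pow]
  have rs11 : r ^ 11 * s ^ 11 = 1 := by rw [← mul_pow, hrs, one_pow]
  have rs14 : r ^ 14 * s ^ 14 = 1 := by rw [← mul_pow, hrs, one_pow]
  have a2 : (2 * (3 * A * ε * s ^ 5))^2/(2 * (ε * s)) * volume.real (closedBall (0:R3) (3 * r^3)) = 486 * A^2 * v * ε := by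
    rw [vol_ball (by positivity), ← hv]
    have : (2 * (3 * A * ε * s ^ 5))^2/(2 * (ε * s)) = 18 * A^2 * ε * s^9 := by
      field_simp; ring
    rw [this]
    linear_combination 486 * A^2 * v * ε * rs9
  have a3 : ∀ i, C3 * (r^3)⁻¹^5 * (∫ x, |ψ x * U i x|) * (∫ x in closedBall 0 (3 * r^3), |U i x|) ≤ C3 * M^2 * C7^2 * s := by
    intro i
    rw [R1]
    have := mul_le_mul ((hh i).trans (u1 i)) (u1 i) (U0 i) (by positivity)
    have := mul_le_mul_of_nonneg_left this (show 0 ≤ C3 * (s^3)^5 by positivity)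
    refine (le_of_eq (by ring)).trans (this.trans (le_of_eq ?_))
    linear_combination C3 * M^2 * C7^2 * s * rs14
  have a4 : ∀ i j, C3 * (r^3)⁻¹^4 * (∫ x, |ψ x * U i x|) * (∫ x in closedBall 0 (3 * r^3), |F i j x|) ≤ 2 * C3 * M^2 * C5 * (C7 * ε + C6 * B * s) := by
    intro i j
    rw [R1]
    have := mul_le_mul ((hh i).trans (u2 i)) (f1 i j) (F0 i j) (by positivity)
    have := mul_le_mul_of_nonneg_left this (show 0 ≤ C3 * (s^3)^4 by positivity)
    refine (le_of_eq (by ring)).trans (this.trans (le_of_eq ?_))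
    linear_combination 2 * C3 * M^2 * C5 * C7 * ε * rs12 + 2 * C3 * M^2 * C5 * C6 * B * s * rs11
  have a34 := Finset.sum_le_sum fun i (_ : i ∈ (Finset.univ : Finset (Fin 3))) =>
    add_le_add (a3 i) (Finset.sum_le_sum fun j (_ : j ∈ (Finset.univ : Finset (Fin 3))) => a4 i j)
  simp only [Finset.sum_const, Finset.card_univ, Fintype.card_fin, nsmul_eq_mul] at a34
  push_cast at a34
  have t1' := (le_abs_self _).trans t1
  have t2' := Finset.sum_le_sum fun j (_ : j ∈ (Finset.univ : Finset (Fin 3))) => (le_abs_self _).trans (t2 j)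
  simp only [Finset.sum_const, Finset.card_univ, Fintype.card_fin, nsmul_eq_mul] at t2'
  push_cast at t2'
  have e1 : 4 * (M * s ^ 2) ^ 2 * (A * s ^ 6) * ((2 * r ^ 3) ^ 3 * v) = 32 * M^2 * A * v * s := by
    linear_combination 32 * M^2 * A * v * s * rs9
  have e2 : 3 * (8 * (M * s ^ 2) ^ 2 * (ε * s ^ 2) * (A * s ^ 3) * ((2 * r ^ 3) ^ 3 * v)) = 192 * M^2 * A * v * ε := by
    linear_combination 192 * M^2 * A * v * ε * rs9
  have t3' := (le_abs_self _).trans t3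
  rw [e1] at t1'
  rw [e2] at t2'
  rw [hE]
  have hBs : 0 ≤ B * s := by positivity
  have tot : (∫ x, enH U V θ x * lap ψ x) + (∑ j, ∫ x, enW U V θ j x * pd ψ j x)
      + ∫ x, p x * ∑ j, pd (fun y => ψ y * U j y) j x ≤ 32 * M^2 * A * v * s + 192 * M^2 * A * v * ε
      + (18 * M^4 * C1 * ε + 486 * A^2 * v * ε + 3 * (C3 * M^2 * C7^2 * s + 3 * (2 * C3 * M^2 * C5 * (C7 * ε + C6 * B * s)))) := by
    linarith
  refine tot.trans ?_
  have k1 : 0 ≤ M^2 * A * v := by positivity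
  have k2 : 0 ≤ M^4 * C1 := by positivity
  have k3 : 0 ≤ A^2 * v := by positivity
  have k4 : 0 ≤ C3 * M^2 * C7^2 := by positivity
  have k5 : 0 ≤ C3 * M^2 * C5 * C7 := by positivity
  have k6 : 0 ≤ C3 * M^2 * C5 * C6 := by positivity
  have w : 0 ≤ ε + (1 + B) * s := by positivity
  have w1 : ε ≤ ε + (1 + B) * s := by nlinarith
  have w2 : s ≤ ε + (1 + B) * s := by nlinarith
  have w3 : B * s ≤ ε + (1 + B) * s := by nlinarith
  have m1 := mul_le_mul_of_nonneg_left w2 k1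
  have m2 := mul_le_mul_of_nonneg_left w1 k1
  have m3 := mul_le_mul_of_nonneg_left w1 k2
  have m4 := mul_le_mul_of_nonneg_left w1 k3
  have m5 := mul_le_mul_of_nonneg_left w2 k4
  have m6 := mul_le_mul_of_nonneg_left w1 k5
  have m7 := mul_le_mul_of_nonneg_left w3 k6
  linarith
end

lemma glob_bd {f : R3 → ℝ} (hf : Continuous f) {a b e K : ℝ} (hb : 0 ≤ b) (he : 0 ≤ e)
    (h : ∀ x : R3, K ≤ ‖x‖ → ‖x‖ ^ a * |f x| ≤ e) :
    ∃ B, 0 ≤ B ∧ ∀ x, x ≠ 0 → |f x| ≤ e * ‖x‖ ^ (-a) + B * ‖x‖ ^ (-b) := by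
  obtain ⟨B, hB, hB'⟩ := near_bd hb hf K
  refine ⟨B, hB, fun x hx => ?_⟩
  have q1 : 0 ≤ e * ‖x‖ ^ (-a) := by positivity
  have q2 : 0 ≤ B * ‖x‖ ^ (-b) := by positivity
  rcases le_total ‖x‖ K with hK | hK
  · linarith [hB' x hx hK]
  · linarith [far_bd hx (h x hK)]

lemma dec_bd {f : R3 → ℝ} {a e K r s : ℝ} (n : ℕ) (ha : 0 ≤ a) (hn : 3 * a = n) (he : 0 ≤ e)
    (hr : 1 ≤ r) (hK : K ≤ r) (hrs : r * s = 1)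
    (h : ∀ x : R3, K ≤ ‖x‖ → ‖x‖ ^ a * |f x| ≤ e) (x : R3) (hx : r ^ 3 ≤ ‖x‖) : |f x| ≤ e * s ^ n := by
  have hr3 : r ≤ r ^ 3 := le_self_pow₀ hr (by norm_num)
  have h0 : 0 < ‖x‖ := by linarith
  refine (far_bd (norm_pos_iff.mp h0) (h x (by linarith))).trans ?_
  exact mul_le_mul_of_nonneg_left (pow_dec n ha hn (by linarith) hrs hx) he

lemma zero_of_pd {f : R3 → ℝ} (hf : Sm f) (h : ∀ j x, pd f j x = 0) {a e K : ℝ} (ha : 0 < a)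
    (hd : ∀ x : R3, K ≤ ‖x‖ → ‖x‖ ^ a * |f x| ≤ e) (x : R3) : f x = 0 := by
  have h1 : ∀ y, fderiv ℝ f y = 0 := by
    intro y
    apply ContinuousLinearMap.coe_injective
    refine (EuclideanSpace.basisFun (Fin 3) ℝ).toBasis.ext fun j => ?_
    simpa [pd] using h j y
  have hc : ∀ y, f y = f x := fun y => is_const_of_fderiv_eq_zero hf.diff h1 y x
  by_contra hne
  have hpos : 0 < |f x| := abs_pos.mpr hne
  obtain ⟨t, ht1, ht2, ht3⟩ := (((tendsto_rpow_atTop ha).eventually_gt_atTop (e / |f x|)).and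
    ((eventually_ge_atTop K).and (eventually_ge_atTop 0))).exists
  have hn : ‖EuclideanSpace.single (0 : Fin 3) t‖ = t := by
    simp [abs_of_nonneg ht3]
  have := hd (EuclideanSpace.single (0 : Fin 3) t) (by rw [hn]; exact ht2)
  rw [hn, hc] at this
  rw [div_lt_iff₀ hpos] at ht1
  linarith

lemma enE_nonneg (U V : Fin 3 → R3 → ℝ) (θ : R3 → ℝ) (x : R3) : 0 ≤ enE U V θ x := by
  unfold enE; positivity

lemma enE_cont {U V : Fin 3 → R3 → ℝ} {θ : R3 → ℝ} (hU : ∀ i, Sm (U i)) (hV : ∀ i, Sm (V i)) (hθ : Sm θ) :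
    Continuous (enE U V θ) := by
  unfold enE
  have h1 := fun i j => ((hU i).pd j).continuous
  have h2 := fun i j => ((hV i).pd j).continuous
  have h3 := fun j => (hθ.pd j).continuous
  fun_prop

set_option maxHeartbeats 2000000

theorem liouville_tcm_C1 (u v : R3 → R3) (pr θ : R3 → ℝ)
    (hu : ContDiff ℝ (⊤ : ℕ∞) u) (hv : ContDiff ℝ (⊤ : ℕ∞) v)
    (hpr : ContDiff ℝ (⊤ : ℕ∞) pr) (hθ : ContDiff ℝ (⊤ : ℕ∞) θ)
    (hsol : TCM u v pr θ)
    (hu_decay : ∀ ε > 0, ∃ K : ℝ, ∀ x : R3, K ≤ ‖x‖ → ‖x‖ ^ (2 / 3 : ℝ) * ‖u x‖ < ε)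
    (hv_decay : ∃ M K : ℝ, 0 < M ∧ 0 < K ∧ ∀ x : R3, K ≤ ‖x‖ → ‖x‖ ^ (2 / 3 : ℝ) * ‖v x‖ ≤ M)
    (hθ_decay : ∀ ε > 0, ∃ K : ℝ, ∀ x : R3, K ≤ ‖x‖ → ‖x‖ ^ (4 / 3 : ℝ) * |θ x| < ε) :
    (∀ x, u x = 0) ∧ (∀ x, v x = 0) ∧ (∀ x, θ x = 0) := by
  obtain ⟨h1, h2, h3, h4⟩ := hsol
  set U : Fin 3 → R3 → ℝ := fun i y => u y i with hUd
  set V : Fin 3 → R3 → ℝ := fun i y => v y i with hVd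
  have hU : ∀ i, Sm (U i) := fun i => contDiff_euclidean.1 hu i
  have hV : ∀ i, Sm (V i) := fun i => contDiff_euclidean.1 hv i
  have co : ∀ (w : R3) i, |w i| ≤ ‖w‖ := fun w i => by
    simpa using PiLp.norm_apply_le w i
  have dU : ∀ ε > 0, ∃ K : ℝ, ∀ i, ∀ x : R3, K ≤ ‖x‖ → ‖x‖ ^ (2 / 3 : ℝ) * |U i x| ≤ ε := by
    intro ε he
    obtain ⟨K, hK⟩ := hu_decay ε he
    refine ⟨K, fun i x hx => le_trans ?_ (hK x hx).le⟩
    exact mul_le_mul_of_nonneg_left (co _ _) (by positivity)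
  obtain ⟨Mv, Kv, Mv0, Kv0, hKv⟩ := hv_decay
  have dV : ∀ i, ∀ x : R3, Kv ≤ ‖x‖ → ‖x‖ ^ (2 / 3 : ℝ) * |V i x| ≤ Mv := fun i x hx =>
    le_trans (mul_le_mul_of_nonneg_left (co _ _) (by positivity)) (hKv x hx)
  obtain ⟨K1, dU1⟩ := dU 1 one_pos
  choose BU BU0 hBU using fun i => glob_bd (hU i).continuous (b := 2/3) (by norm_num) zero_le_one (dU1 i)
  choose BV BV0 hBV using fun i => glob_bd (hV i).continuous (b := 2/3) (by norm_num) Mv0.le (dV i)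
  have sU := Finset.sum_nonneg fun i (_ : i ∈ (Finset.univ : Finset (Fin 3))) => BU0 i
  have sV := Finset.sum_nonneg fun i (_ : i ∈ (Finset.univ : Finset (Fin 3))) => BV0 i
  obtain ⟨M, hM⟩ : ∃ t, t = 1 + Mv + (∑ i, BU i) + ∑ i, BV i := ⟨_, rfl⟩
  have gU : ∀ i x, x ≠ 0 → |U i x| ≤ M * ‖x‖ ^ (-(2/3:ℝ)) := by
    intro i x hx
    have := Finset.single_le_sum (fun j (_ : j ∈ Finset.univ) => BU0 j) (Finset.mem_univ i)
    refine (hBU i x hx).trans ?_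
    rw [← add_mul]
    exact mul_le_mul_of_nonneg_right (by linarith) (by positivity)
  have gV : ∀ i x, x ≠ 0 → |V i x| ≤ M * ‖x‖ ^ (-(2/3:ℝ)) := by
    intro i x hx
    have := Finset.single_le_sum (fun j (_ : j ∈ Finset.univ) => BV0 j) (Finset.mem_univ i)
    refine (hBV i x hx).trans ?_
    rw [← add_mul]
    exact mul_le_mul_of_nonneg_right (by linarith) (by positivity)
  obtain ⟨φ, A, hcut⟩ := cutoff
  have hcut : Cut φ A := hcut
  obtain ⟨C, C0, hC⟩ := main_est hcut (by linarith) hU hV hpr hθ h1 h2 h3 h4 gU gV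
  have hEc := enE_cont hU hV hθ
  have hE0 := enE_nonneg U V θ
  have hE : ∀ x, enE U V θ x = 0 := by
    by_contra! hne
    obtain ⟨x0, hx0⟩ := hne
    obtain ⟨ρ, hρ⟩ : ∃ t, t = 1 + ‖x0‖ := ⟨_, rfl⟩
    have ρ1 : 1 ≤ ρ := by linarith [norm_nonneg x0]
    have hρs : ρ * ρ⁻¹ = 1 := mul_inv_cancel₀ (by linarith)
    have ρ3 : ρ ≤ ρ ^ 3 := le_self_pow₀ ρ1 (by norm_num)
    obtain ⟨ψ, hψd⟩ : ∃ ψ : R3 → ℝ, ψ = fun x => φ (ρ⁻¹ ^ 3 • x) := ⟨_, rfl⟩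
    obtain ⟨hψ, ψ0, ψ1, ψle, ψz, -⟩ := cut_scale hcut (by linarith : 0 < ρ) hρs hψd
    have hψc := cs_of ψz
    have cpos : 0 < ∫ x, enE U V θ x * ψ x := by
      refine Continuous.integral_pos_of_hasCompactSupport_nonneg_nonzero (f := fun x => enE U V θ x * ψ x)
        (x := x0) (hEc.mul hψ.continuous) (hψc.mul_left) (fun x => mul_nonneg (hE0 x) (ψ0 x)) ?_
      rw [ψ1 x0 (by linarith), mul_one]; exact hx0
    obtain ⟨c, hc⟩ : ∃ c, c = ∫ x, enE U V θ x * ψ x := ⟨_, rfl⟩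
    rw [← hc] at cpos
    obtain ⟨ε, hε⟩ : ∃ t : ℝ, t = min 1 (c / (4 * (C + 1))) := ⟨_, rfl⟩
    have ε0 : 0 < ε := hε ▸ lt_min one_pos (by positivity)
    have Cε : C * ε ≤ c / 4 := by
      have : ε ≤ c / (4 * (C + 1)) := hε ▸ min_le_right _ _
      have h := mul_le_mul_of_nonneg_left this C0
      refine h.trans ?_
      rw [← mul_div_assoc, div_le_div_iff₀ (by positivity) (by norm_num)]
      nlinarith
    obtain ⟨KU, dUe⟩ := dU ε ε0
    obtain ⟨Kt, dt⟩ := hθ_decay ε ε0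
    choose B B0 hB using fun i => glob_bd (hU i).continuous (b := 1) (by norm_num) ε0.le (dUe i)
    have sB := Finset.sum_nonneg fun i (_ : i ∈ (Finset.univ : Finset (Fin 3))) => B0 i
    obtain ⟨D, hD⟩ : ∃ t, t = ∑ i, B i := ⟨_, rfl⟩
    obtain ⟨q, hq⟩ : ∃ t, t = 4 * C * (1 + D) / c := ⟨_, rfl⟩
    rw [← hD] at sB
    have q0 : 0 ≤ q := by rw [hq]; positivity
    obtain ⟨r, hr⟩ : ∃ t, t = 2 * ρ ^ 3 + |KU| + |Kt| + Kv + q := ⟨_, rfl⟩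
    have hKU := abs_nonneg KU
    have hKt := abs_nonneg Kt
    have hKU' := le_abs_self KU
    have hKt' := le_abs_self Kt
    have r1 : 1 ≤ r := by linarith
    have hrs : r * r⁻¹ = 1 := mul_inv_cancel₀ (by linarith)
    have r3 : r ≤ r ^ 3 := le_self_pow₀ r1 (by norm_num)
    have fin := hC ε D r r⁻¹ ε0 (hε ▸ min_le_left _ _) sB r1 hrs (fun i x hx => by
        have : B i ≤ D := hD ▸ Finset.single_le_sum (fun j (_ : j ∈ (Finset.univ : Finset (Fin 3))) => B0 j) (Finset.mem_univ i)
        refine (hB i x hx).trans (add_le_add_right ?_ _)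
        exact mul_le_mul_of_nonneg_right this (by positivity))
      (fun i => dec_bd 2 (by norm_num) (by norm_num) ε0.le r1 (by linarith) hrs (dUe i))
      (fun i x hx => (dec_bd 2 (by norm_num) (by norm_num) Mv0.le r1 (by linarith) hrs (dV i) x hx).trans
        (mul_le_mul_of_nonneg_right (by linarith) (by positivity)))
      (dec_bd 4 (by norm_num) (by norm_num) ε0.le r1 (by linarith) hrs (fun x hx => (dt x hx).le))
    obtain ⟨hχ, χ0, χ1, χle, χz, -⟩ := cut_scale hcut (by linarith : 0 < r) hrs rfl
    have mono : c ≤ ∫ x, enE U V θ x * φ (r⁻¹ ^ 3 • x) := by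
      rw [hc]
      refine integral_mono (int_cs hEc hψ.continuous hψc) (int_cs hEc hχ.continuous (cs_of χz)) fun x => ?_
      refine mul_le_mul_of_nonneg_left ?_ (hE0 x)
      rcases lt_or_ge (2 * ρ ^ 3) ‖x‖ with hx | hx
      · rw [ψz x hx]; exact χ0 x
      · have := χ1 x (by linarith)
        exact (ψle x).trans this.ge
    have last : C * ((1 + D) * r⁻¹) ≤ c / 4 := by
      have hqr : q ≤ r := by
        have : 0 ≤ ρ ^ 3 := by linarith
        linarith
      rw [hq, div_le_iff₀ cpos] at hqr
      have rp : 0 < r⁻¹ := inv_pos.mpr (by linarith)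
      have := mul_le_mul_of_nonneg_right hqr rp.le
      have e : r * c * r⁻¹ = c := by linear_combination c * hrs
      rw [e] at this
      linarith
    linarith
  have hsq : ∀ i j x, pd (U i) j x = 0 ∧ pd (V i) j x = 0 ∧ pd θ j x = 0 := by
    intro i j x
    have := hE x
    simp only [enE] at this
    have n1 : ∀ (W : Fin 3 → R3 → ℝ), 0 ≤ ∑ i, ∑ j, pd (W i) j x ^ 2 := fun W => by positivity
    have n2 : 0 ≤ ∑ j, pd θ j x ^ 2 := by positivity
    have z : ∀ (W : Fin 3 → R3 → ℝ), ∑ i, ∑ j, pd (W i) j x ^ 2 = 0 → pd (W i) j x = 0 := by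
      intro W hW
      rw [Finset.sum_eq_zero_iff_of_nonneg (fun i _ => by positivity)] at hW
      have hW := hW i (Finset.mem_univ i)
      rw [Finset.sum_eq_zero_iff_of_nonneg (fun i _ => by positivity)] at hW
      exact pow_eq_zero_iff (two_ne_zero) |>.mp (hW j (Finset.mem_univ j))
    refine ⟨z U (by linarith [n1 U, n1 V]), z V (by linarith [n1 U, n1 V]), ?_⟩
    have t : ∑ j, pd θ j x ^ 2 = 0 := by linarith [n1 U, n1 V]
    rw [Finset.sum_eq_zero_iff_of_nonneg (fun i _ => by positivity)] at t
    exact pow_eq_zero_iff (two_ne_zero) |>.mp (t j (Finset.mem_univ j))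
  obtain ⟨Kt, dt⟩ := hθ_decay 1 one_pos
  refine ⟨fun x => ?_, fun x => ?_, ?_⟩
  · ext i
    exact zero_of_pd (hU i) (fun j x => (hsq i j x).1) (by norm_num) (dU1 i) x
  · ext i
    exact zero_of_pd (hV i) (fun j x => (hsq i j x).2.1) (by norm_num) (dV i) x
  · exact zero_of_pd hθ (fun j x => (hsq 0 j x).2.2) (by norm_num) (fun x hx => (dt x hx).le)
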